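/- arXiv:0903.2864 — 4 statements merged into one kernel-verified Lean document; each statement's English description precedes it below -/
import Mathlib

section
/- Let S_2≀S_k ≤ S_{2k} be the subgroup of permutations mapping each pair {2i−1,2i} (1 ≤ i ≤ k) to some pair {2j−1,2j}, and let Δ_k = {g ∈ S_2≀S_k : sgn(g) = sgn(ḡ)}, where ḡ is the permutation of the k pairs induced by g. Then: (i) for every k ≥ 33, the permutation character of S_{2k} on the cosets of Δ_k is not multiplicity-free; (ii) for k = 32, the permutation character of S_{64} on the cosets of Δ_{32} IS multiplicity-free. -/
/-- The permutation character of `G` on the cosets of `H` is multiplicity-free: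
every irreducible complex representation of `G` has at most a one-dimensional
subspace of `H`-fixed vectors. -/
noncomputable def IsMultFree {G : Type} [Group G] (H : Subgroup G) : Prop :=
  ∀ V : FDRep ℂ G, CategoryTheory.Simple V →
    Module.finrank ℂ (Representation.invariants (V.ρ.comp H.subtype)) ≤ 1

/-- `σ` is the permutation of the `k` pairs `{2i−1, 2i}` of `{1,…,2k}` induced by the
permutation `g` (so `g` maps each pair onto a pair, pair `j` going to pair `σ j`). -/
def InducedPairPerm {k : ℕ} (g : Equiv.Perm (Fin (2 * k))) (σ : Equiv.Perm (Fin k)) : Prop :=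
  ∀ i : Fin (2 * k), ((g i : ℕ) / 2) = (σ ⟨(i : ℕ) / 2, by have := i.isLt; omega⟩ : ℕ)


open CategoryTheory in
theorem simple_stable {G : Type} [Group G] (V : FDRep ℂ G) (hV : Simple V)
    (W : Submodule ℂ V) (hW : ∀ g : G, ∀ v ∈ W, V.ρ g v ∈ W) (hne : W ≠ ⊥) : W = ⊤ := by
  let r : Representation ℂ G W :=
    { toFun := fun g => (V.ρ g).restrict (hW g)
      map_one' := by ext; simp
      map_mul' := fun a b => by ext; simp }
  let f : FDRep.of r ⟶ V :=
    { hom := FGModuleCat.ofHom W.subtype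
      comm := fun g => by
        apply FGModuleCat.hom_ext
        ext x
        rfl }
  have hmono : Mono f := by
    constructor
    intro Z a b hab
    ext x
    exact congrArg (fun t : Z ⟶ V => t.hom.hom.hom x) hab
  have hf0 : f ≠ 0 := by
    intro h0
    apply hne
    rw [Submodule.eq_bot_iff]
    intro x hx
    exact congrArg (fun t : FDRep.of r ⟶ V => t.hom.hom.hom (⟨x, hx⟩ : W)) h0
  have hiso : IsIso f := (Simple.mono_isIso_iff_nonzero f).2 hf0
  rw [eq_top_iff]
  intro x _
  have h1 : inv f ≫ f = 𝟙 V := IsIso.inv_hom_id f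
  have h2 := congrArg (fun t : V ⟶ V => t.hom.hom.hom x) h1
  have h3 : ((((inv f).hom.hom.hom x) : W) : V) = x := h2
  rw [← h3]
  exact Subtype.property _

open CategoryTheory in
theorem simple_of_stable {G : Type} [Group G] [Finite G] {U : Type} [AddCommGroup U] [Module ℂ U]
    [Module.Finite ℂ U] [Nontrivial U] (r : Representation ℂ G U)
    (h : ∀ W : Submodule ℂ U, (∀ g : G, ∀ v ∈ W, r g v ∈ W) → W ≠ ⊥ → W = ⊤) :
    Simple (FDRep.of r) := by
  rw [FDRep.simple_iff_end_is_rank_one]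
  have h1 : (𝟙 (FDRep.of r)) ≠ 0 := by
    intro h0
    obtain ⟨x, hx⟩ := exists_ne (0 : U)
    exact hx (congrArg (fun t : FDRep.of r ⟶ FDRep.of r => t.hom.hom.hom x) h0)
  rw [finrank_eq_one_iff_of_nonzero' _ h1]
  intro f
  let φ : U →ₗ[ℂ] U := f.hom.hom.hom
  obtain ⟨c, hc⟩ := Module.End.exists_eigenvalue φ
  refine ⟨c, ?_⟩
  have hcomm : ∀ g x, φ (r g x) = r g (φ x) := fun g x =>
    congrArg (fun t => t.hom.hom x) (f.comm g)
  have htop := h (Module.End.eigenspace φ c) (by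
    intro g v hv
    rw [Module.End.mem_eigenspace_iff] at hv ⊢
    rw [hcomm, hv, map_smul]) hc
  ext x
  have hx : x ∈ Module.End.eigenspace φ c := by rw [htop]; trivial
  rw [Module.End.mem_eigenspace_iff] at hx
  exact hx.symm

/-- Gelfand's trick. -/
theorem gelfand {G : Type} [Group G] [Finite G] (H : Subgroup G)
    (hH : ∀ g : G, ∃ h ∈ H, ∃ h' ∈ H, g⁻¹ = h * g * h') : IsMultFree H := by
  classical
  intro V hV
  have := Fintype.ofFinite G
  let e : V →ₗ[ℂ] V := ∑ h : H, V.ρ h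
  have hmulR : ∀ h ∈ H, e * V.ρ h = e := by
    intro h hh
    simp only [e, Finset.sum_mul, ← map_mul]
    exact Fintype.sum_equiv (Equiv.mulRight (⟨h, hh⟩ : H)) _ _ (fun x => by simp)
  have hmulL : ∀ h ∈ H, V.ρ h * e = e := by
    intro h hh
    simp only [e, Finset.mul_sum, ← map_mul]
    exact Fintype.sum_equiv (Equiv.mulLeft (⟨h, hh⟩ : H)) _ _ (fun x => by simp)
  let N : ℂ := (Fintype.card H : ℂ)
  have hN : N ≠ 0 := by simp [N]
  have hee : e * e = N • e := by
    conv_lhs => 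
      enter [1]
      simp only [e]
    rw [Finset.sum_mul, Finset.sum_congr rfl (fun (h : H) _ => hmulL h h.2)]
    simp [N, Nat.cast_smul_eq_nsmul]
  let T : G → (V →ₗ[ℂ] V) := fun g => e * V.ρ g * e
  have hTinv : ∀ g, T g⁻¹ = T g := by
    intro g
    obtain ⟨h, hh, h', hh', hg⟩ := hH g
    simp only [T]
    rw [hg, map_mul, map_mul, ← mul_assoc, ← mul_assoc, hmulR h hh, mul_assoc, hmulL h' hh']
  have hprod : ∀ a b, T a * T b = N • ∑ h : H, T (a * h * b) := by
    intro a b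
    have : T a * T b = e * V.ρ a * (e * e) * V.ρ b * e := by simp only [T, mul_assoc]
    rw [this, hee]
    simp only [mul_smul_comm, smul_mul_assoc]
    congr 1
    conv_lhs => 
      enter [1, 1, 2]
      simp only [e]
    simp only [Finset.mul_sum, Finset.sum_mul, T, map_mul, mul_assoc]
  have hcomm : ∀ a b, T a * T b = T b * T a := by
    intro a b
    rw [← hTinv a, ← hTinv b, hprod, hTinv b, hTinv a, hprod]
    congr 1
    refine Fintype.sum_equiv (Equiv.inv H) _ _ (fun x => ?_)
    rw [← hTinv]
    congr 1
    simp [mul_assoc]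
  set W := Representation.invariants (V.ρ.comp H.subtype) with hWdef
  have hWmem : ∀ w, w ∈ W ↔ ∀ h ∈ H, V.ρ h w = w := by
    intro w
    rw [hWdef, Representation.mem_invariants]
    simp
  have heW : ∀ w ∈ W, e w = N • w := by
    intro w hw
    rw [hWmem] at hw
    simp only [e, LinearMap.sum_apply]
    rw [Finset.sum_congr rfl (fun (h : H) _ => hw h h.2)]
    simp [N, Nat.cast_smul_eq_nsmul]
  have hTW : ∀ g v, T g v ∈ W := by
    intro g v
    rw [hWmem]
    intro h hh
    change (V.ρ h * T g) v = _
    simp only [T]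
    rw [← mul_assoc, ← mul_assoc, hmulL h hh]
  have hspan : ∀ u ∈ W, u ≠ 0 → ∀ w ∈ W, w ∈ Submodule.span ℂ (Set.range fun g => T g u) := by
    intro u hu hu0 w hw
    have htop := simple_stable V hV (Submodule.span ℂ (Set.range fun g => V.ρ g u)) (by
      intro g v hv
      induction hv using Submodule.span_induction with
      | mem x hx =>
        obtain ⟨a, rfl⟩ := hx
        refine Submodule.subset_span ⟨g * a, ?_⟩
        simp
      | zero => simp
      | add x y _ _ hx hy => rw [map_add]; exact add_mem hx hy
      | smul c x _ hx => rw [map_smul]; exact Submodule.smul_mem _ _ hx) (by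
      intro hb
      rw [Submodule.span_eq_bot] at hb
      exact hu0 (by simpa using hb _ ⟨1, rfl⟩))
    have hmem : ∀ v ∈ Submodule.span ℂ (Set.range fun g => V.ρ g u),
        e v ∈ Submodule.span ℂ (Set.range fun g => T g u) := by
      intro v hv
      induction hv using Submodule.span_induction with
      | mem x hx =>
        obtain ⟨a, rfl⟩ := hx
        have : e (V.ρ a u) = N⁻¹ • T a u := by
          change _ = N⁻¹ • (e (V.ρ a (e u)))
          rw [heW u hu]
          simp [hN]
        change e (V.ρ a u) ∈ _
        rw [this]
        exact Submodule.smul_mem _ _ (Submodule.subset_span ⟨a, rfl⟩)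
      | zero => simp
      | add x y _ _ hx hy => rw [map_add]; exact add_mem hx hy
      | smul c x _ hx => rw [map_smul]; exact Submodule.smul_mem _ _ hx
    have h1 := hmem w (by rw [htop]; trivial)
    rw [heW w hw] at h1
    have := Submodule.smul_mem _ N⁻¹ h1
    simpa [hN] using this
  by_cases hW0 : W = ⊥
  · rw [hW0]; simp
  obtain ⟨u, hu, hu0⟩ := Submodule.exists_mem_ne_zero_of_ne_bot hW0
  have hscal : ∀ g, ∃ c : ℂ, T g u = c • u := by
    intro g
    have : Nontrivial W := (Submodule.nontrivial_iff_ne_bot).2 hW0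
    let φ : W →ₗ[ℂ] W := (T g).restrict (fun v _ => hTW g v)
    obtain ⟨c, hc⟩ := Module.End.exists_eigenvalue φ
    obtain ⟨x, hx⟩ := hc.exists_hasEigenvector
    have hx1 : T g (x : V) = c • (x : V) := congrArg Subtype.val hx.apply_eq_smul
    have hx0 : (x : V) ≠ 0 := fun h => hx.2 (Subtype.ext h)
    refine ⟨c, ?_⟩
    have := hspan x x.2 hx0 u hu
    clear hu hu0
    induction this using Submodule.span_induction with
    | mem y hy =>
      obtain ⟨a, rfl⟩ := hy
      change (T g * T a) x = _
      rw [hcomm]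
      change T a (T g x) = _
      rw [hx1, map_smul]
    | zero => simp
    | add y z _ _ hy hz => rw [map_add, hy, hz, smul_add]
    | smul d y _ hy => rw [map_smul, hy, smul_comm]
  have hle : W ≤ Submodule.span ℂ {u} := by
    intro w hw
    have h1 := hspan u hu hu0 w hw
    refine (Submodule.span_le.2 ?_) h1
    rintro _ ⟨g, rfl⟩
    obtain ⟨c, hc⟩ := hscal g
    exact Submodule.mem_span_singleton.2 ⟨c, hc.symm⟩
  calc Module.finrank ℂ W ≤ Module.finrank ℂ (Submodule.span ℂ {u}) :=
        Submodule.finrank_mono hle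
    _ ≤ 1 := by simpa using finrank_span_le_card (R := ℂ) ({u} : Set V)

theorem eq_zero_of_neg_one {U : Type*} [AddCommGroup U] [Module ℂ U] {x : U} {z : ℂ}
    (hz : z = -1) (h : x = z • x) : x = 0 := by
  have h4 : ((1 : ℂ) - z) • x = 0 := by
    rw [sub_smul, one_smul, sub_eq_zero]
    exact h
  rcases smul_eq_zero.1 h4 with h | h
  · rw [hz] at h; norm_num at h
  · exact h

theorem exists_simple_act {G : Type} [Group G] [Finite G] (f : MonoidAlgebra ℂ G) (hf : f ≠ 0) :
    ∃ S : Submodule (MonoidAlgebra ℂ G) (MonoidAlgebra ℂ G),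
      IsSimpleModule (MonoidAlgebra ℂ G) S ∧ ∃ s : S, f • s ≠ 0 := by
  by_contra! hcon
  have htop := IsSemisimpleModule.sSup_simples_eq_top (MonoidAlgebra ℂ G) (MonoidAlgebra ℂ G)
  have h1 : (1 : MonoidAlgebra ℂ G) ∈
      sSup { m : Submodule (MonoidAlgebra ℂ G) (MonoidAlgebra ℂ G) |
        IsSimpleModule (MonoidAlgebra ℂ G) m } := by rw [htop]; trivial
  have h2 : ∀ x ∈ sSup { m : Submodule (MonoidAlgebra ℂ G) (MonoidAlgebra ℂ G) |
        IsSimpleModule (MonoidAlgebra ℂ G) m }, f * x = 0 := by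
    intro x hx
    rw [sSup_eq_iSup'] at hx
    induction hx using Submodule.iSup_induction' with
    | mem i x hx =>
      have := hcon i.1 i.2 ⟨x, hx⟩
      exact congrArg Subtype.val this
    | zero => simp
    | add x y _ _ hx hy => rw [mul_add, hx, hy, add_zero]
  exact hf (by simpa using h2 1 h1)

theorem not_multFree {G : Type} [Group G] [Finite G] (H B : Subgroup G) (ch : G → ℤˣ)
    (hmul : ∀ a ∈ B, ∀ b ∈ B, ch (a * b) = ch a * ch b)
    (hHB : ∀ h ∈ H, h ∈ B ∧ ch h = 1)
    (c : G) (hc : c ∈ B) (hc1 : ch c = -1)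
    (g : G) (hg : ∀ b ∈ B, ∀ b' ∈ B, b * g * b' = g → ch b = 1) : ¬ IsMultFree H := by
  classical
  intro hMF
  have := Fintype.ofFinite G
  let δ : G → MonoidAlgebra ℂ G := fun x => MonoidAlgebra.single x 1
  have hδ : ∀ a b, δ a * δ b = δ (a * b) := by
    intro a b
    simp [δ, MonoidAlgebra.single_mul_single]
  let eB : MonoidAlgebra ℂ G := ∑ b : B, δ b
  let eX : MonoidAlgebra ℂ G := ∑ b : B, ((ch b : ℤ) : ℂ) • δ b
  have heB : ∀ b ∈ B, δ b * eB = eB := by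
    intro b hb
    simp only [eB, Finset.mul_sum, hδ]
    exact Fintype.sum_equiv (Equiv.mulLeft (⟨b, hb⟩ : B)) _ _ (fun x => by simp)
  have hsq : ∀ b, ((ch b : ℤ) : ℂ) * ((ch b : ℤ) : ℂ) = 1 := by
    intro b
    rcases Int.units_eq_one_or (ch b) with h | h <;> simp [h]
  have heX : ∀ b ∈ B, δ b * eX = ((ch b : ℤ) : ℂ) • eX := by
    intro b hb
    simp only [eX, Finset.mul_sum, Finset.smul_sum, mul_smul_comm, hδ]
    refine Fintype.sum_equiv (Equiv.mulLeft (⟨b, hb⟩ : B)) _ _ (fun x => ?_)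
    simp only [Equiv.coe_mulLeft, Subgroup.coe_mul]
    rw [hmul b hb x x.2, smul_smul]
    congr 1
    push_cast
    rw [← mul_assoc, hsq, one_mul]
  let f : MonoidAlgebra ℂ G := eX * δ g * eB
  have hf : f ≠ 0 := by
    have hexp : f = ∑ b : B, ∑ b' : B, ((ch b : ℤ) : ℂ) • δ (b * g * b') := by
      simp only [f, eX, eB, Finset.sum_mul, Finset.mul_sum, smul_mul_assoc, hδ]
      rw [Finset.sum_comm]
    have hco : f.coeff g = ∑ b : B, ∑ b' : B, if (b : G) * g * b' = g then (1 : ℂ) else 0 := by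
      rw [hexp]
      simp only [δ, MonoidAlgebra.coeff_sum, MonoidAlgebra.coeff_smul, MonoidAlgebra.coeff_single,
        Finsupp.finsetSum_apply, Finsupp.smul_apply, Finsupp.single_apply]
      refine Finset.sum_congr rfl (fun b _ => Finset.sum_congr rfl (fun b' _ => ?_))
      split_ifs with h
      · rw [hg b b.2 b' b'.2 h]; simp
      · simp
    intro h0
    rw [h0, ← Fintype.sum_prod_type', Finset.sum_boole] at hco
    have h5 := hco.symm
    simp only [MonoidAlgebra.coeff_zero, Finsupp.zero_apply, Nat.cast_eq_zero,
      Finset.card_eq_zero] at h5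
    have h6 := Finset.filter_eq_empty_iff.1 h5 (Finset.mem_univ ((1 : B), (1 : B)))
    exact h6 (by simp)
  obtain ⟨S, hS, s, hs⟩ := exists_simple_act f hf
  let r : Representation ℂ G S := Representation.ofModule' S
  have hr : ∀ x (v : S), r x v = δ x • v := by
    intro x v
    simp [r, Representation.ofModule', δ]
  have hnt : Nontrivial S := IsSimpleModule.nontrivial (MonoidAlgebra ℂ G) S
  have hsimp : CategoryTheory.Simple (FDRep.of r) := by
    apply simple_of_stable
    intro W hW hne
    have hWA : ∀ (a : MonoidAlgebra ℂ G) (v : S), v ∈ W → a • v ∈ W := by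
      intro a v hv
      induction a using MonoidAlgebra.induction_on with
      | of x => 
        have := hW x v hv
        rw [hr] at this
        exact this
      | add x y hx hy => rw [add_smul]; exact add_mem hx hy
      | smul x c hx => rw [smul_assoc]; exact W.smul_mem _ hx
    let W' : Submodule (MonoidAlgebra ℂ G) S := { W with smul_mem' := fun a v hv => hWA a v hv }
    rcases eq_bot_or_eq_top W' with h | h
    · exfalso
      apply hne
      rw [Submodule.eq_bot_iff]
      intro x hx
      have : x ∈ W' := hx
      rw [h] at this
      simpa using this
    · rw [eq_top_iff]
      intro x _
      have : x ∈ W' := by rw [h]; trivial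
      exact this
  have h1 := hMF (FDRep.of r) hsimp
  have hv : eB • s ≠ 0 := by
    intro h
    apply hs
    simp only [f]
    rw [mul_smul, h, smul_zero]
  have hvB : ∀ b ∈ B, r b (eB • s) = eB • s := by
    intro b hb
    rw [hr, ← mul_smul, heB b hb]
  have hwB : ∀ b ∈ B, r b (f • s) = ((ch b : ℤ) : ℂ) • (f • s) := by
    intro b hb
    rw [hr, ← mul_smul]
    simp only [f]
    rw [← mul_assoc, ← mul_assoc, heX b hb, smul_mul_assoc, smul_mul_assoc, smul_assoc]
  let W := Representation.invariants ((FDRep.of r).ρ.comp H.subtype)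
  have hW : ∀ w : S, (∀ h ∈ H, r h w = w) → w ∈ W := by
    intro w hw
    intro h
    exact hw h h.2
  let v1 : W := ⟨eB • s, hW _ (fun h hh => hvB h (hHB h hh).1)⟩
  let v2 : W := ⟨f • s, hW _ (fun h hh => by
    rw [hwB h (hHB h hh).1, (hHB h hh).2]; simp)⟩
  have hv1 : v1 ≠ 0 := fun h => hv (congrArg Subtype.val h)
  obtain ⟨μ, hμ⟩ := (finrank_le_one_iff.1 h1).elim (fun w hw => by
    obtain ⟨a, ha⟩ := hw v1
    obtain ⟨b, hb⟩ := hw v2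
    have ha0 : a ≠ 0 := by rintro rfl; exact hv1 (ha.symm.trans (zero_smul ℂ w))
    exact (⟨b * a⁻¹, by
      refine hb.symm.trans (Eq.trans ?_ (congrArg (fun z => (b * a⁻¹) • z) ha))
      exact (Eq.trans (by rw [mul_assoc, inv_mul_cancel₀ ha0, mul_one]) (mul_smul (b * a⁻¹) a w))⟩ : ∃ μ : ℂ, v2 = μ • v1))
  have hμ' : f • s = μ • (eB • s) := congrArg Subtype.val hμ
  have h3 := hwB c hc
  rw [hμ', map_smul, hvB c hc, hc1, ← hμ'] at h3
  apply hs
  exact Subtype.ext (eq_zero_of_neg_one (by simp) (congrArg Subtype.val h3))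

open Equiv Equiv.Perm in
theorem sign_invol {α : Type*} [Fintype α] [DecidableEq α] (f : Perm α) (h : f * f = 1) :
    sign f = (-1) ^ (f.support.card / 2) := by
  have h2 : ∀ n ∈ f.cycleType, n = 2 := by
    intro n hn
    have h1 := dvd_of_mem_cycleType hn
    have h3 := two_le_of_mem_cycleType hn
    have h4 : orderOf f ∣ 2 := orderOf_dvd_of_pow_eq_one (by rw [pow_two, h])
    have := Nat.le_of_dvd (by norm_num) (h1.trans h4)
    omega
  have h3 := Multiset.eq_replicate_card.2 h2
  have h4 := sum_cycleType f
  rw [sign_of_cycleType, h4]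
  rw [h3] at h4
  simp only [Multiset.sum_replicate, smul_eq_mul] at h4
  rw [← h4]
  simp only [Nat.mul_div_cancel _ (by norm_num : 0 < 2)]
  rw [pow_add, mul_comm _ 2, pow_mul]
  simp

open Equiv Equiv.Perm in
theorem sign_sigma_single {Q : Type*} [Fintype Q] [DecidableEq Q] {F : Q → Type*}
    [∀ q, Fintype (F q)] [∀ q, DecidableEq (F q)] (q : Q) (t : Perm (F q)) :
    sign (Perm.sigmaCongrRight (Pi.mulSingle (M := fun q => Perm (F q)) q t)) = sign t := by
  symm
  refine sign_bij (fun x _ => (⟨q, x⟩ : Σ q, F q)) ?_ ?_ ?_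
  · intro x _ _
    simp [Equiv.Perm.sigmaCongrRight, Equiv.sigmaCongrRight]
  · intro a b _ _ h
    simpa using h
  · rintro ⟨a, x⟩ h
    by_cases ha : a = q
    · subst ha
      refine ⟨x, ?_, rfl⟩
      simpa [Equiv.Perm.sigmaCongrRight, Equiv.sigmaCongrRight] using h
    · exfalso
      apply h
      simp [Equiv.Perm.sigmaCongrRight, Equiv.sigmaCongrRight, Pi.mulSingle_eq_of_ne ha]

open Equiv Equiv.Perm in
theorem sign_sigma {Q : Type*} [Fintype Q] [DecidableEq Q] {F : Q → Type*}
    [∀ q, Fintype (F q)] [∀ q, DecidableEq (F q)] (t : ∀ q, Perm (F q)) :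
    sign (Perm.sigmaCongrRight t) = ∏ q, sign (t q) := by
  have key : ∀ S : Finset Q, sign (Perm.sigmaCongrRight (fun q => if q ∈ S then t q else 1)) =
      ∏ q ∈ S, sign (t q) := by
    intro S
    induction S using Finset.induction_on with
    | empty =>
      simp only [Finset.notMem_empty, if_false, Finset.prod_empty]
      rw [show (Perm.sigmaCongrRight fun q : Q => (1 : Perm (F q))) = 1 from Perm.sigmaCongrRight_one]
      simp
    | insert a S ha ih =>
      rw [Finset.prod_insert ha, ← ih, ← sign_sigma_single a (t a), ← Perm.sign_mul,
        Perm.sigmaCongrRight_mul]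
      congr 2
      funext q
      by_cases hq : q = a
      · subst hq; simp [ha]
      · simp [hq]
  simpa using key Finset.univ

open Equiv Equiv.Perm in
theorem sign_prod_form {Y : Type*} [Fintype Y] [DecidableEq Y] (b : Perm (Y × Bool)) (σ : Perm Y)
    (c : Y → Bool) (h : ∀ y e, b (y, e) = (σ y, xor e (c y))) :
    sign b = ∏ y, if c y then -1 else 1 := by
  have hb : b = prodCongrLeft (fun _ : Bool => σ) *
      prodCongrRight (fun y => if c y then swap false true else 1) := by
    ext ⟨y, e⟩ : 1
    rw [h]
    simp only [Perm.mul_apply, prodCongrRight_apply, prodCongrLeft_apply]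
    congr 1
    cases hc : c y <;> cases e <;> simp
  rw [hb, Perm.sign_mul, sign_prodCongrLeft, sign_prodCongrRight]
  simp only [Finset.prod_const, Finset.card_univ, Fintype.card_bool, Int.units_sq, one_mul]
  refine Finset.prod_congr rfl (fun y _ => ?_)
  split_ifs
  · rw [sign_swap (by simp)]
  · simp

open Equiv Equiv.Perm in
theorem comm_form {Y Z : Type*} [Finite Y] [Finite Z] (F : Y × Bool ≃ Z × Bool)
    (h : ∀ y e, F (y, !e) = ((F (y, e)).1, !(F (y, e)).2)) :
    ∃ (σ : Y ≃ Z) (c : Y → Bool), ∀ y e, F (y, e) = (σ y, xor e (c y)) := by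
  have hinj : Function.Injective (fun y => (F (y, false)).1) := by
    intro y y' hy
    simp only at hy
    by_cases h2 : (F (y, false)).2 = (F (y', false)).2
    · have := F.injective (Prod.ext hy h2)
      exact congrArg Prod.fst this
    · have h3 : F (y, false) = F (y', true) := by
        have h4 := h y' false
        simp only [Bool.not_false] at h4
        rw [h4]
        refine Prod.ext hy ?_
        simp only
        exact (by decide : ∀ a b : Bool, a ≠ b → a = !b) _ _ h2
      have := F.injective h3
      simp at this
  have hsurj : Function.Surjective (fun y => (F (y, false)).1) := by
    intro z
    obtain ⟨⟨y, e⟩, hy⟩ := F.surjective (z, false)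
    refine ⟨y, ?_⟩
    cases e
    · simp [hy]
    · have h4 := h y true
      simp only [Bool.not_true] at h4
      simp [h4, hy]
  refine ⟨Equiv.ofBijective _ ⟨hinj, hsurj⟩, fun y => (F (y, false)).2, ?_⟩
  intro y e
  cases e
  · exact Prod.ext rfl (by simp)
  · have h4 := h y false
    simp only [Bool.not_false] at h4
    rw [h4]
    exact Prod.ext rfl (by simp)

open Equiv Equiv.Perm in
theorem sign_addLeft_odd {n : ℕ} [NeZero n] (hn : n % 2 = 1) (a : ZMod n) :
    sign (Equiv.addLeft a) = 1 := by
  have h1 : (Equiv.addLeft a) ^ n = (1 : Perm (ZMod n)) := by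
    have : ∀ m : ℕ, ∀ x, ((Equiv.addLeft a) ^ m : Perm (ZMod n)) x = m * a + x := by
      intro m
      induction m with
      | zero => simp
      | succ m ih => intro x; rw [pow_succ, Perm.mul_apply, ih]; simp; ring
    ext x
    rw [this]; simp
  have h2 := congrArg sign h1
  rw [map_pow, map_one] at h2
  rcases Int.units_eq_one_or (sign (Equiv.addLeft a)) with h | h
  · exact h
  · rw [h, Odd.neg_one_pow (Nat.odd_iff.2 hn)] at h2
    exact absurd h2 (by decide)

open Equiv Equiv.Perm in
theorem sign_neg_odd {n : ℕ} [NeZero n] (hn : n % 2 = 1) :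
    sign (Equiv.neg (ZMod n)) = (-1) ^ (n / 2) := by
  rw [sign_invol _ (by ext x; simp)]
  congr 1
  have : (Equiv.neg (ZMod n)).support = Finset.univ.erase 0 := by
    ext x
    simp only [mem_support, Equiv.neg_apply, ne_eq, ZMod.neg_eq_self_iff, Finset.mem_erase,
      Finset.mem_univ, and_true, not_or]
    constructor
    · exact fun h => h.1
    · exact fun h => ⟨h, by omega⟩
  rw [this, Finset.card_erase_of_mem (Finset.mem_univ _), Finset.card_univ, ZMod.card]
  omega

open Equiv Equiv.Perm in
theorem sign_subLeft {n : ℕ} [NeZero n] (a : ZMod n) :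
    sign (Equiv.subLeft a) = sign (Equiv.addLeft a) * sign (Equiv.neg (ZMod n)) := by
  rw [← Perm.sign_mul]
  congr 1
  ext x
  simp [sub_eq_add_neg]

open Equiv Equiv.Perm in
theorem sign_add_one {n : ℕ} [NeZero n] : sign (Equiv.addLeft (1 : ZMod n)) = (-1) ^ (n - 1) := by
  cases n with
  | zero => exact absurd rfl (NeZero.ne 0)
  | succ n =>
    rw [← sign_finRotate]
    have : (Equiv.addLeft (1 : ZMod (n + 1)) : Perm (ZMod (n + 1))) = finRotate (n + 1) := by
      apply Equiv.ext
      intro x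
      have h := finRotate_apply (n := n + 1) x
      exact (add_comm (1 : ZMod (n + 1)) x).trans h.symm
    rw [this]
    congr!

open Equiv Equiv.Perm in
def shM {Q : Type} (l : Q → ℕ) : Perm (Σ q, ZMod (l q)) :=
  Perm.sigmaCongrRight (fun _ => Equiv.addRight 1)

theorem shM_apply {Q : Type} (l : Q → ℕ) (q : Q) (j : ZMod (l q)) :
    shM l ⟨q, j⟩ = ⟨q, j + 1⟩ := rfl

structure ValidM {Y : Type} (sh σ : Equiv.Perm Y) (c : Y → Bool) : Prop where
  hc : ∀ y, c (sh y) = c y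
  h0 : ∀ y, c y = false → σ (sh y) = sh (σ y)
  h1 : ∀ y, c y = true → sh (σ (sh y)) = σ y

theorem valid_c {Q : Type} {l : Q → ℕ} [∀ q, NeZero (l q)] {σ : Equiv.Perm (Σ q, ZMod (l q))}
    {c : (Σ q, ZMod (l q)) → Bool} (hv : ValidM (shM l) σ c) (q : Q) (j : ZMod (l q)) :
    c ⟨q, j⟩ = c ⟨q, 0⟩ := by
  have : ∀ n : ℕ, c ⟨q, (n : ZMod (l q))⟩ = c ⟨q, 0⟩ := by
    intro n
    induction n with
    | zero => simp
    | succ n ih =>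
      have := hv.hc ⟨q, n⟩
      rw [shM_apply] at this
      rw [Nat.cast_succ, this, ih]
  have h := this j.val
  rwa [ZMod.natCast_zmod_val] at h

theorem valid_form {Q : Type} {l : Q → ℕ} [∀ q, NeZero (l q)] {σ : Equiv.Perm (Σ q, ZMod (l q))}
    {c : (Σ q, ZMod (l q)) → Bool} (hv : ValidM (shM l) σ c) (q : Q) :
    ∃ p : Q, l p ∣ l q ∧ ∃ a : ZMod (l p), ∀ n : ℕ, σ ⟨q, (n : ZMod (l q))⟩ =
      ⟨p, if c ⟨q, 0⟩ then a - n else a + n⟩ := by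
  obtain ⟨p, a, hp⟩ : ∃ p, ∃ a : ZMod (l p), σ ⟨q, 0⟩ = ⟨p, a⟩ := ⟨_, _, rfl⟩
  have key : ∀ n : ℕ, σ ⟨q, (n : ZMod (l q))⟩ = ⟨p, if c ⟨q, 0⟩ then a - n else a + n⟩ := by
    intro n
    induction n with
    | zero => simp [hp]
    | succ n ih =>
      cases hc : c ⟨q, 0⟩
      · have h2 := hv.h0 ⟨q, n⟩ (by rw [valid_c hv, hc])
        rw [shM_apply, ih, hc, shM_apply] at h2
        rw [Nat.cast_succ, h2]
        simp [add_assoc]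
      · have h2 := hv.h1 ⟨q, n⟩ (by rw [valid_c hv, hc])
        rw [shM_apply l q, ih, hc] at h2
        rw [Nat.cast_succ]
        apply (shM l).injective
        rw [h2, shM_apply]
        simp
        ring
  refine ⟨p, ?_, a, key⟩
  have h := key (l q)
  rw [ZMod.natCast_self, hp] at h
  have h2 := eq_of_heq (Sigma.mk.inj h).2
  rw [← ZMod.natCast_eq_zero_iff]
  split_ifs at h2
  · exact (sub_eq_self.1 h2.symm)
  · simpa using h2

theorem modelN {Q : Type} [Fintype Q] [DecidableEq Q] (l : Q → ℕ) [∀ q, NeZero (l q)]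
    (hinj : Function.Injective l) (h3 : ∀ q, l q % 4 = 3) (σ : Equiv.Perm (Σ q, ZMod (l q)))
    (c : (Σ q, ZMod (l q)) → Bool) (hv : ValidM (shM l) σ c) :
    (∏ y, if c y then -1 else 1) = Equiv.Perm.sign σ := by
  choose τ hd hτ using valid_form hv
  have hsurj : Function.Surjective τ := by
    intro q'
    obtain ⟨⟨q, j⟩, hy⟩ := σ.surjective ⟨q', 0⟩
    obtain ⟨a, ha⟩ := hτ q
    have := ha j.val
    rw [ZMod.natCast_zmod_val, hy] at this
    exact ⟨q, (congrArg Sigma.fst this).symm⟩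
  have hbij : Function.Bijective τ := Finite.surjective_iff_bijective.1 hsurj
  have hle : ∀ q ∈ Finset.univ, l (τ q) ≤ l q :=
    fun q _ => Nat.le_of_dvd (Nat.pos_of_ne_zero (NeZero.ne _)) (hd q)
  have hsum : ∑ q, l (τ q) = ∑ q, l q := hbij.sum_comp l
  have heq := (Finset.sum_eq_sum_iff_of_le hle).1 hsum
  have hid : ∀ q, τ q = q := fun q => hinj (heq q (Finset.mem_univ _))
  have hτ' : ∀ q, ∃ a : ZMod (l q), ∀ n : ℕ, σ ⟨q, (n : ZMod (l q))⟩ =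
      ⟨q, if c ⟨q, 0⟩ then a - n else a + n⟩ := by
    intro q
    have := hτ q
    rwa [hid q] at this
  choose a ha using hτ'
  have hσ : σ = Equiv.Perm.sigmaCongrRight
      (fun q => if c ⟨q, 0⟩ then Equiv.subLeft (a q) else Equiv.addLeft (a q)) := by
    ext1 ⟨q, j⟩
    have := ha q j.val
    rw [ZMod.natCast_zmod_val] at this
    rw [this]
    simp only [Equiv.Perm.sigmaCongrRight, Equiv.sigmaCongrRight_apply]
    split_ifs <;> rfl
  rw [hσ, sign_sigma, Fintype.prod_sigma]
  refine Finset.prod_congr rfl (fun q _ => ?_)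
  have h4 := h3 q
  simp only [valid_c hv q]
  rw [Finset.prod_const, Finset.card_univ, ZMod.card]
  split_ifs
  · rw [sign_subLeft, sign_addLeft_odd (by omega), sign_neg_odd (by omega), one_mul,
      Odd.neg_one_pow (Nat.odd_iff.2 (by omega)), Odd.neg_one_pow (Nat.odd_iff.2 (by omega))]
  · rw [sign_addLeft_odd (by omega), one_pow]

def IsInd {X Y : Type} (π : X → Y) (b : Equiv.Perm X) (σ : Equiv.Perm Y) : Prop :=
  ∀ x, π (b x) = σ (π x)

theorem IsInd.mul {X Y : Type} {π : X → Y} {b b' : Equiv.Perm X} {σ σ' : Equiv.Perm Y}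
    (h : IsInd π b σ) (h' : IsInd π b' σ') : IsInd π (b * b') (σ * σ') := by
  intro x
  rw [Equiv.Perm.mul_apply, Equiv.Perm.mul_apply, h, h']

theorem IsInd.one {X Y : Type} {π : X → Y} : IsInd π 1 1 := fun _ => rfl

theorem IsInd.inv {X Y : Type} {π : X → Y} {b : Equiv.Perm X} {σ : Equiv.Perm Y}
    (h : IsInd π b σ) : IsInd π b⁻¹ σ⁻¹ := by
  intro x
  rw [Equiv.Perm.eq_inv_iff_eq, ← h]
  simp

theorem IsInd.uniq {X Y : Type} {π : X → Y} (hπ : Function.Surjective π) {b : Equiv.Perm X}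
    {σ σ' : Equiv.Perm Y} (h : IsInd π b σ) (h' : IsInd π b σ') : σ = σ' := by
  ext1 y
  obtain ⟨x, rfl⟩ := hπ y
  rw [← h, ← h']

theorem IsInd.transport {X Y X' Y' : Type} {π : X → Y} {π' : X' → Y'} (eX : X ≃ X') (eY : Y ≃ Y')
    (he : ∀ x, π' (eX x) = eY (π x)) {b : Equiv.Perm X} {σ : Equiv.Perm Y} (h : IsInd π b σ) :
    IsInd π' (eX.permCongr b) (eY.permCongr σ) := by
  intro x
  obtain ⟨x, rfl⟩ := eX.surjective x
  simp [Equiv.permCongr_apply, he, h x]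

def Bsub {X Y : Type} (π : X → Y) : Subgroup (Equiv.Perm X) where
  carrier := {b | ∃ σ, IsInd π b σ}
  mul_mem' := by
    rintro a b ⟨σ, h⟩ ⟨σ', h'⟩
    exact ⟨_, h.mul h'⟩
  one_mem' := ⟨1, IsInd.one⟩
  inv_mem' := by
    rintro a ⟨σ, h⟩
    exact ⟨_, h.inv⟩

open Classical in
noncomputable def chF {X Y : Type} [Fintype X] [DecidableEq X] [Fintype Y] [DecidableEq Y]
    (π : X → Y) (b : Equiv.Perm X) : ℤˣ :=
  if h : ∃ σ, IsInd π b σ then Equiv.Perm.sign b * Equiv.Perm.sign h.choose else 1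

theorem chF_eq {X Y : Type} [Fintype X] [DecidableEq X] [Fintype Y] [DecidableEq Y]
    {π : X → Y} (hπ : Function.Surjective π) {b : Equiv.Perm X} {σ : Equiv.Perm Y}
    (h : IsInd π b σ) : chF π b = Equiv.Perm.sign b * Equiv.Perm.sign σ := by
  have h' : ∃ σ, IsInd π b σ := ⟨σ, h⟩
  rw [chF, dif_pos h', IsInd.uniq hπ h'.choose_spec h]

theorem units_mul_eq_one_iff (a b : ℤˣ) : a * b = 1 ↔ a = b := by
  revert a b; decide

theorem chF_mul {X Y : Type} [Fintype X] [DecidableEq X] [Fintype Y] [DecidableEq Y]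
    {π : X → Y} (hπ : Function.Surjective π) :
    ∀ a ∈ Bsub π, ∀ b ∈ Bsub π, chF π (a * b) = chF π a * chF π b := by
  rintro a ⟨σ, h⟩ b ⟨σ', h'⟩
  rw [chF_eq hπ h, chF_eq hπ h', chF_eq hπ (h.mul h'), Equiv.Perm.sign_mul, Equiv.Perm.sign_mul]
  exact mul_mul_mul_comm _ _ _ _

def CondN {X Y : Type} [Fintype X] [DecidableEq X] [Fintype Y] [DecidableEq Y]
    (π : X → Y) : Prop :=
  ∃ g : Equiv.Perm X, ∀ b b' σ σ', IsInd π b σ → IsInd π b' σ' → b * g * b' = g →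
    Equiv.Perm.sign b = Equiv.Perm.sign σ

def CondA {X Y : Type} [Fintype X] [DecidableEq X] [Fintype Y] [DecidableEq Y]
    (π : X → Y) (g : Equiv.Perm X) : Prop :=
  ∃ h h' σ σ', IsInd π h σ ∧ IsInd π h' σ' ∧ Equiv.Perm.sign h = Equiv.Perm.sign σ ∧
    Equiv.Perm.sign h' = Equiv.Perm.sign σ' ∧ g⁻¹ = h * g * h'

theorem CondA.transport {X Y X' Y' : Type} [Fintype X] [DecidableEq X] [Fintype Y] [DecidableEq Y]
    [Fintype X'] [DecidableEq X'] [Fintype Y'] [DecidableEq Y']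
    {π : X → Y} {π' : X' → Y'} (eX : X ≃ X') (eY : Y ≃ Y')
    (he : ∀ x, π' (eX x) = eY (π x)) {g : Equiv.Perm X} (hg : CondA π g) :
    CondA π' (eX.permCongr g) := by
  obtain ⟨h, h', σ, σ', h1, h2, h3, h4, h5⟩ := hg
  refine ⟨eX.permCongr h, eX.permCongr h', _, _, h1.transport eX eY he, h2.transport eX eY he,
    ?_, ?_, ?_⟩
  · rw [Equiv.Perm.sign_permCongr, Equiv.Perm.sign_permCongr, h3]
  · rw [Equiv.Perm.sign_permCongr, Equiv.Perm.sign_permCongr, h4]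
  · have := congrArg (eX.permCongrHom) h5
    rw [map_mul, map_mul, map_inv] at this
    exact this

theorem CondN.transport {X Y X' Y' : Type} [Fintype X] [DecidableEq X] [Fintype Y] [DecidableEq Y]
    [Fintype X'] [DecidableEq X'] [Fintype Y'] [DecidableEq Y']
    {π : X → Y} {π' : X' → Y'} (eX : X ≃ X') (eY : Y ≃ Y')
    (he : ∀ x, π' (eX x) = eY (π x)) (hg : CondN π) : CondN π' := by
  obtain ⟨g, hg⟩ := hg
  refine ⟨eX.permCongr g, ?_⟩
  intro b b' σ σ' hb hb' hbb
  have he' : ∀ x, π (eX.symm x) = eY.symm (π' x) := by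
    intro x
    obtain ⟨x, rfl⟩ := eX.surjective x
    simp [he]
  have := hg _ _ _ _ (hb.transport eX.symm eY.symm he') (hb'.transport eX.symm eY.symm he') (by
    have := congrArg (eX.symm.permCongrHom) hbb
    rw [map_mul, map_mul] at this
    have h2 : eX.symm.permCongrHom (eX.permCongr g) = g := by
      ext x; simp [Equiv.permCongrHom, Equiv.permCongr_apply]
    rw [h2] at this
    exact this)
  rwa [Equiv.Perm.sign_permCongr, Equiv.Perm.sign_permCongr] at this

theorem final_A {X Y : Type} [Fintype X] [DecidableEq X] [Fintype Y] [DecidableEq Y]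
    {π : X → Y} (H : Subgroup (Equiv.Perm X))
    (hH : ∀ g, g ∈ H ↔ ∃ σ, IsInd π g σ ∧ Equiv.Perm.sign g = Equiv.Perm.sign σ)
    (hA : ∀ g, CondA π g) : IsMultFree H := by
  apply gelfand
  intro g
  obtain ⟨h, h', σ, σ', h1, h2, h3, h4, h5⟩ := hA g
  exact ⟨h, (hH h).2 ⟨σ, h1, h3⟩, h', (hH h').2 ⟨σ', h2, h4⟩, h5⟩

theorem final_N {X Y : Type} [Fintype X] [DecidableEq X] [Fintype Y] [DecidableEq Y]
    {π : X → Y} (hπ : Function.Surjective π) (H : Subgroup (Equiv.Perm X))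
    (hH : ∀ g, g ∈ H ↔ ∃ σ, IsInd π g σ ∧ Equiv.Perm.sign g = Equiv.Perm.sign σ)
    (hN : CondN π) (d : Equiv.Perm X) (δ : Equiv.Perm Y) (hd : IsInd π d δ)
    (hdd : Equiv.Perm.sign d * Equiv.Perm.sign δ = -1) : ¬ IsMultFree H := by
  obtain ⟨g, hg⟩ := hN
  refine not_multFree H (Bsub π) (chF π) (chF_mul hπ) ?_ d ⟨δ, hd⟩ ?_ g ?_
  · intro h hh
    obtain ⟨σ, h1, h2⟩ := (hH h).1 hh
    exact ⟨⟨σ, h1⟩, by rw [chF_eq hπ h1, units_mul_eq_one_iff, h2]⟩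
  · rw [chF_eq hπ hd, hdd]
  · rintro b ⟨σ, hb⟩ b' ⟨σ', hb'⟩ h
    rw [chF_eq hπ hb, units_mul_eq_one_iff]
    exact hg b b' σ σ' hb hb' h

def pairEquiv (k : ℕ) : Fin (2 * k) ≃ Fin k × Bool where
  toFun i := (⟨(i : ℕ) / 2, by have := i.isLt; omega⟩, decide ((i : ℕ) % 2 = 1))
  invFun p := ⟨2 * p.1 + p.2.toNat, by have := p.1.isLt; have := Bool.toNat_le p.2; omega⟩
  left_inv i := by
    apply Fin.ext
    simp only
    rcases Nat.mod_two_eq_zero_or_one i with h | h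
    · simp [h]; omega
    · simp [h]; omega
  right_inv p := by
    obtain ⟨⟨j, hj⟩, e⟩ := p
    cases e
    · simp
    · simp; omega

def pairPi (k : ℕ) (i : Fin (2 * k)) : Fin k := ⟨(i : ℕ) / 2, by have := i.isLt; omega⟩

theorem induced_iff {k : ℕ} (g : Equiv.Perm (Fin (2 * k))) (σ : Equiv.Perm (Fin k)) :
    InducedPairPerm g σ ↔ IsInd (pairPi k) g σ := by
  unfold InducedPairPerm IsInd
  refine forall_congr' (fun i => ?_)
  rw [Fin.ext_iff]
  rfl

theorem pairPi_eq (k : ℕ) (p : Fin k × Bool) : pairPi k ((pairEquiv k).symm p) = p.1 := by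
  have : pairPi k ((pairEquiv k).symm p) = (pairEquiv k ((pairEquiv k).symm p)).1 := rfl
  rw [this, Equiv.apply_symm_apply]

theorem pairPi_surj (k : ℕ) : Function.Surjective (pairPi k) :=
  fun y => ⟨(pairEquiv k).symm (y, false), pairPi_eq k _⟩

theorem ind_form {Y : Type} {b : Equiv.Perm (Y × Bool)} {σ : Equiv.Perm Y}
    (h : IsInd Prod.fst b σ) : ∃ c : Y → Bool, ∀ y e, b (y, e) = (σ y, xor e (c y)) := by
  refine ⟨fun y => (b (y, false)).2, fun y e => Prod.ext (h (y, e)) ?_⟩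
  cases e
  · simp
  · have h1 : (b (y, true)).2 ≠ (b (y, false)).2 := by
      intro h2
      have := b.injective (Prod.ext ((h (y, true)).trans (h (y, false)).symm) h2)
      simp at this
    exact (by decide : ∀ a b : Bool, a ≠ b → a = xor true b) _ _ h1

theorem condN_model {Q : Type} [Fintype Q] [DecidableEq Q] (l : Q → ℕ) [∀ q, NeZero (l q)]
    (hinj : Function.Injective l) (h3 : ∀ q, l q % 4 = 3) :
    CondN (Prod.fst : (Σ q, ZMod (l q)) × Bool → (Σ q, ZMod (l q))) := by
  let g : Equiv.Perm ((Σ q, ZMod (l q)) × Bool) :=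
    Equiv.prodCongrLeft (fun e => if e then shM l else 1)
  have g0 : ∀ y, g (y, false) = (y, false) := fun _ => rfl
  have g1 : ∀ y, g (y, true) = (shM l y, true) := fun _ => rfl
  refine ⟨g, ?_⟩
  intro b b' σ σ' hb hb' hbb
  obtain ⟨c, hc⟩ := ind_form hb
  obtain ⟨c', hc'⟩ := ind_form hb'
  rw [sign_prod_form b σ c hc]
  apply modelN l hinj h3
  have key : ∀ z, c (shM l z) = c z ∧ (c z = false → σ (shM l z) = shM l (σ z)) ∧
      (c z = true → shM l (σ (shM l z)) = σ z) := by
    intro z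
    obtain ⟨y, rfl⟩ := σ'.surjective z
    have e0 := congrArg (fun f : Equiv.Perm _ => f (y, false)) hbb
    have e1 := congrArg (fun f : Equiv.Perm _ => f (y, true)) hbb
    simp only [Equiv.Perm.mul_apply, hc', g0, g1] at e0 e1
    cases h : c' y
    · simp only [h, Bool.false_xor, Bool.true_xor, Bool.not_false, g0, g1, hc,
        Prod.mk.injEq] at e0 e1
      simp_all
    · simp only [h, Bool.false_xor, Bool.true_xor, Bool.not_true, g0, g1, hc,
        Prod.mk.injEq] at e0 e1
      simp_all
  exact ⟨fun y => (key y).1, fun y => (key y).2.1, fun y => (key y).2.2⟩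

theorem exists_parts (k : ℕ) (hk : 33 ≤ k) :
    ∃ S : Finset ℕ, (∀ n ∈ S, n % 4 = 3) ∧ ∑ n ∈ S, n = k := by
  have h : k % 4 = 0 ∨ k % 4 = 1 ∨ k % 4 = 2 ∨ k % 4 = 3 := by omega
  rcases h with h | h | h | h
  · refine ⟨{3, 7, 11, k - 21}, ?_, ?_⟩
    · simp; omega
    · rw [Finset.sum_insert, Finset.sum_insert, Finset.sum_insert, Finset.sum_singleton]
      all_goals try simp only [Finset.mem_insert, Finset.mem_singleton]
      all_goals omega
  · refine ⟨{3, 7, k - 10}, ?_, ?_⟩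
    · simp; omega
    · rw [Finset.sum_insert, Finset.sum_insert, Finset.sum_singleton]
      all_goals try simp only [Finset.mem_insert, Finset.mem_singleton]
      all_goals omega
  · refine ⟨{3, k - 3}, ?_, ?_⟩
    · simp; omega
    · rw [Finset.sum_insert, Finset.sum_singleton]
      all_goals try simp only [Finset.mem_insert, Finset.mem_singleton]
      all_goals omega
  · exact ⟨{k}, by simpa using h, by simp⟩

theorem condN_pair (k : ℕ) (hk : 33 ≤ k) : CondN (pairPi k) := by
  obtain ⟨S, hS, hsum⟩ := exists_parts k hk
  let l : {x // x ∈ S} → ℕ := Subtype.val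
  have hl : ∀ q, l q % 4 = 3 := fun q => hS q.1 q.2
  have : ∀ q, NeZero (l q) := fun q => ⟨by have := hl q; omega⟩
  have hN := condN_model l Subtype.val_injective hl
  have hcard : Fintype.card (Σ q, ZMod (l q)) = k := by
    rw [Fintype.card_sigma]
    simp only [ZMod.card]
    rw [← hsum]
    exact Finset.sum_coe_sort S (fun n => n)
  let eY := Fintype.equivFinOfCardEq hcard
  exact hN.transport ((eY.prodCongr (Equiv.refl Bool)).trans (pairEquiv k).symm) eY
    (fun x => by simp [pairPi_eq])

theorem part_one (k : ℕ) (hk : 33 ≤ k) (H : Subgroup (Equiv.Perm (Fin (2 * k))))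
    (hH : ∀ g : Equiv.Perm (Fin (2 * k)), g ∈ H ↔
          ∃ σ : Equiv.Perm (Fin k), InducedPairPerm g σ ∧
            Equiv.Perm.sign g = Equiv.Perm.sign σ) : ¬ IsMultFree H := by
  simp only [induced_iff] at hH
  refine final_N (pairPi_surj k) H hH (condN_pair k hk)
    (Equiv.swap ⟨0, by omega⟩ ⟨1, by omega⟩) 1 ?_ ?_
  · intro x
    rw [Equiv.swap_apply_def]
    split_ifs with h h
    · subst h; simp [pairPi]
    · subst h; simp [pairPi]
    · rfl
  · rw [Equiv.Perm.sign_swap (by simp)]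
    simp

theorem abs_lemma {G : Type} [Group G] (B : Subgroup G) (ch : G → ℤˣ)
    (hmul : ∀ a ∈ B, ∀ b ∈ B, ch (a * b) = ch a * ch b) (s c g d : G) (hs : s * s = 1)
    (hc : c ∈ B) (hgc : g * c = s) (hd : d ∈ B) (hsd : s * d * s ∈ B) (hch : ch d = -1) :
    ∃ h ∈ B, ∃ h' ∈ B, ch h = 1 ∧ ch h' = 1 ∧ g⁻¹ = h * g * h' := by
  have h1 : ch 1 = 1 := by
    have := hmul 1 B.one_mem 1 B.one_mem
    rw [one_mul] at this
    exact left_eq_mul.1 this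
  have hinv : ∀ a ∈ B, ch a⁻¹ = ch a := by
    intro a ha
    have := hmul a ha a⁻¹ (B.inv_mem ha)
    rw [mul_inv_cancel, h1] at this
    exact ((units_mul_eq_one_iff _ _).1 this.symm).symm
  have hs' : s⁻¹ = s := inv_eq_of_mul_eq_one_left hs
  have hg : g = s * c⁻¹ := by rw [← hgc]; group
  have hgi : g⁻¹ = c * s := by rw [hg, mul_inv_rev, inv_inv, hs']
  rcases Int.units_eq_one_or (ch c) with hcc | hcc
  · refine ⟨c, hc, c, hc, hcc, hcc, ?_⟩
    rw [hgi, mul_assoc, hgc]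
  · obtain ⟨D, hD, hsD, hD1, hD2⟩ : ∃ D ∈ B, s * D * s ∈ B ∧ ch D = -1 ∧ ch (s * D * s) = -1 := by
      rcases Int.units_eq_one_or (ch (s * d * s)) with h | h
      · have e : s * (d * (s * d * s)) * s = (s * d * s) * d := by
          calc _ = (s * d * s) * d * (s * s) := by group
            _ = _ := by rw [hs, mul_one]
        refine ⟨d * (s * d * s), B.mul_mem hd hsd, ?_, ?_, ?_⟩
        · rw [e]; exact B.mul_mem hsd hd
        · rw [hmul _ hd _ hsd, hch, h, mul_one]
        · rw [e, hmul _ hsd _ hd, hch, h, one_mul]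
      · exact ⟨d, hd, hsd, hch, h⟩
    refine ⟨c * D, B.mul_mem hc hD, c * (s * D * s)⁻¹, B.mul_mem hc (B.inv_mem hsD), ?_, ?_, ?_⟩
    · rw [hmul _ hc _ hD, hcc, hD1]; decide
    · rw [hmul _ hc _ (B.inv_mem hsD), hinv _ hsD, hcc, hD2]; decide
    · rw [hgi]
      calc c * s = c * s⁻¹ := by rw [hs']
        _ = c * D * (s * c⁻¹) * (c * (s * D * s)⁻¹) := by group
        _ = _ := by rw [← hg]

theorem comm_ind {Y : Type} [Finite Y] (f x : Equiv.Perm (Y × Bool))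
    (hf : ∀ y e, f (y, e) = (y, !e)) (hx : x * f = f * x) : ∃ σ, IsInd Prod.fst x σ := by
  obtain ⟨σ, c, h⟩ := comm_form x (fun y e => by
    have := congrArg (fun g : Equiv.Perm _ => g (y, e)) hx
    simp only [Equiv.Perm.mul_apply, hf] at this
    exact this)
  exact ⟨σ, fun ⟨y, e⟩ => by rw [h]⟩

def flM (Y : Type) : Equiv.Perm (Y × Bool) := Equiv.prodCongr (Equiv.refl Y) Equiv.boolNot

theorem flM_apply {Y : Type} (y : Y) (e : Bool) : flM Y (y, e) = (y, !e) := rfl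

def ioM {Q : Type} (l : Q → ℕ) : Equiv.Perm (Σ q, ZMod (l q)) :=
  Equiv.Perm.sigmaCongrRight (fun _ => Equiv.neg _)

theorem ioM_apply {Q : Type} (l : Q → ℕ) (q : Q) (j : ZMod (l q)) :
    ioM l ⟨q, j⟩ = ⟨q, -j⟩ := rfl

def sM {Q : Type} (l : Q → ℕ) : Equiv.Perm ((Σ q, ZMod (l q)) × Bool) :=
  Equiv.prodCongrLeft (fun e => if e then shM l * ioM l else ioM l)

theorem sM_false {Q : Type} (l : Q → ℕ) (q : Q) (j : ZMod (l q)) :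
    sM l (⟨q, j⟩, false) = (⟨q, -j⟩, false) := rfl

theorem sM_true {Q : Type} (l : Q → ℕ) (q : Q) (j : ZMod (l q)) :
    sM l (⟨q, j⟩, true) = (⟨q, -j + 1⟩, true) := rfl

theorem sM_sq {Q : Type} (l : Q → ℕ) : sM l * sM l = 1 := by
  ext1 ⟨⟨q, j⟩, e⟩
  cases e
  · simp [sM_false]
  · simp [sM_true]

def m1M {Q : Type} (l : Q → ℕ) : Equiv.Perm ((Σ q, ZMod (l q)) × Bool) :=
  sM l * flM _ * sM l

theorem m1M_false {Q : Type} (l : Q → ℕ) (q : Q) (j : ZMod (l q)) :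
    m1M l (⟨q, j⟩, false) = (⟨q, j + 1⟩, true) := by
  simp [m1M, sM_false, sM_true, flM_apply]

theorem m1M_true {Q : Type} (l : Q → ℕ) (q : Q) (j : ZMod (l q)) :
    m1M l (⟨q, j⟩, true) = (⟨q, j - 1⟩, false) := by
  simp [m1M, sM_false, sM_true, flM_apply]
  ring

theorem m1M_sh {Q : Type} (l : Q → ℕ) (y : Σ q, ZMod (l q)) :
    m1M l (y, false) = (shM l y, true) := by
  obtain ⟨q, j⟩ := y
  rw [m1M_false, shM_apply]

theorem m1M_sh' {Q : Type} (l : Q → ℕ) (y : Σ q, ZMod (l q)) :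
    m1M l (shM l y, true) = (y, false) := by
  obtain ⟨q, j⟩ := y
  rw [shM_apply, m1M_true]
  simp

theorem modelA {Q : Type} [Fintype Q] [DecidableEq Q] (l : Q → ℕ) [∀ q, NeZero (l q)]
    (σ : Equiv.Perm (Σ q, ZMod (l q)))
    (c : (Σ q, ZMod (l q)) → Bool) (hv : ValidM (shM l) σ c)
    (hch : (∏ y, if c y then -1 else 1) * Equiv.Perm.sign σ = -1)
    (g : Equiv.Perm ((Σ q, ZMod (l q)) × Bool)) (hg : g * flM _ = m1M l * g) :
    CondA Prod.fst g := by
  have hπ : Function.Surjective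
      (Prod.fst : (Σ q, ZMod (l q)) × Bool → (Σ q, ZMod (l q))) := fun y => ⟨(y, false), rfl⟩
  let cc := g⁻¹ * sM l
  have hcc : cc ∈ Bsub (Prod.fst : (Σ q, ZMod (l q)) × Bool → (Σ q, ZMod (l q))) := by
    apply comm_ind (flM _) cc (fun _ _ => rfl)
    have hs := sM_sq l
    have h1 : flM _ * g⁻¹ = g⁻¹ * m1M l := by
      rw [eq_inv_mul_iff_mul_eq, ← mul_assoc, hg]; group
    calc cc * flM _ = g⁻¹ * (sM l * flM _ * (1 : Equiv.Perm ((Σ q, ZMod (l q)) × Bool))) := by simp only [cc]; group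
      _ = g⁻¹ * m1M l * sM l := by rw [← hs, m1M]; group
      _ = flM _ * cc := by rw [← h1]; simp only [cc]; group
  let d : Equiv.Perm ((Σ q, ZMod (l q)) × Bool) :=
    Equiv.prodCongrLeft (fun _ : Bool => σ) *
      Equiv.prodCongrRight (fun y => if c y then Equiv.boolNot else 1)
  have hd : ∀ y e, d (y, e) = (σ y, xor e (c y)) := by
    intro y e
    simp only [d, Equiv.Perm.mul_apply, Equiv.prodCongrRight_apply, Equiv.prodCongrLeft_apply]
    congr 1
    cases hc : c y <;> cases e <;> simp
  have hdi : IsInd Prod.fst d σ := fun ⟨y, e⟩ => by rw [hd]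
  have hdm : d * m1M l = m1M l * d := by
    have e0 : ∀ y, d (m1M l (y, false)) = m1M l (d (y, false)) := by
      intro y
      rw [m1M_sh, hd, hd, hv.hc]
      cases h : c y
      · simp [m1M_sh, hv.h0 y h]
      · have := hv.h1 y h
        rw [← this]
        simp [m1M_sh']
    have mm : ∀ x, m1M l (m1M l x) = x := by
      rintro ⟨⟨q, j⟩, e⟩
      cases e
      · simp [m1M_false, m1M_true]
      · simp [m1M_false, m1M_true]
    ext1 ⟨y, e⟩
    cases e
    · exact e0 y
    · obtain ⟨z, rfl⟩ := (shM l).surjective y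
      have := e0 z
      rw [m1M_sh] at this
      simp only [Equiv.Perm.mul_apply]
      rw [this, mm, m1M_sh']
  have hsds : sM l * d * sM l ∈ Bsub (Prod.fst : (Σ q, ZMod (l q)) × Bool → _) := by
    apply comm_ind (flM _) _ (fun _ _ => rfl)
    have hs := sM_sq l
    have hs' : (sM l)⁻¹ = sM l := inv_eq_of_mul_eq_one_left hs
    rw [m1M] at hdm
    calc sM l * d * sM l * flM _ = sM l * (d * (sM l * flM _ * sM l)) * (sM l)⁻¹ := by group
      _ = (sM l * sM l) * flM _ * (sM l * d * (sM l)⁻¹) := by rw [hdm]; group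
      _ = _ := by rw [hs, hs', one_mul]
  obtain ⟨h, ⟨τ, hτ⟩, h', ⟨τ', hτ'⟩, h1, h2, h3⟩ := abs_lemma (Bsub Prod.fst) (chF Prod.fst)
    (chF_mul hπ) (sM l) cc g d (sM_sq l) hcc (by simp [cc]) ⟨σ, hdi⟩ hsds
    (by rw [chF_eq hπ hdi, sign_prod_form d σ c hd, hch])
  refine ⟨h, h', τ, τ', hτ, hτ', ?_, ?_, h3⟩
  · rwa [chF_eq hπ hτ, units_mul_eq_one_iff] at h1
  · rwa [chF_eq hπ hτ', units_mul_eq_one_iff] at h2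

theorem valid_refl {Q : Type} [Fintype Q] [DecidableEq Q] (l : Q → ℕ) [∀ q, NeZero (l q)]
    (q : Q) (a : ZMod (l q))
    (h : (-1) ^ (l q) * (Equiv.Perm.sign (Equiv.addLeft a) *
      Equiv.Perm.sign (Equiv.neg (ZMod (l q)))) = -1) :
    ∃ (σ : Equiv.Perm (Σ q, ZMod (l q))) (c : (Σ q, ZMod (l q)) → Bool), ValidM (shM l) σ c ∧
      (∏ y, if c y then -1 else 1) * Equiv.Perm.sign σ = -1 := by
  refine ⟨Equiv.Perm.sigmaCongrRight
    (Pi.mulSingle (M := fun q => Equiv.Perm (ZMod (l q))) q (Equiv.subLeft a)),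
    fun y => decide (y.1 = q), ⟨?_, ?_, ?_⟩, ?_⟩
  · rintro ⟨p, j⟩
    rfl
  · rintro ⟨p, j⟩ hp
    have hp : p ≠ q := by simpa using hp
    simp [shM_apply, Equiv.Perm.sigmaCongrRight, Pi.mulSingle_eq_of_ne hp]
  · rintro ⟨p, j⟩ hp
    have hp : p = q := by simpa using hp
    subst hp
    simp [shM_apply, Equiv.Perm.sigmaCongrRight]
    ring
  · rw [sign_sigma_single, sign_subLeft]
    refine Eq.trans ?_ h
    congr 1
    rw [Fintype.prod_sigma]
    simp only [decide_eq_true_eq]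
    rw [Finset.prod_eq_single q]
    · simp
    · intro p _ hp
      simp [hp]
    · simp

theorem sig_cast {Q : Type} {l : Q → ℕ} {p p' : Q} (h : p = p') (n : ℕ) :
    (⟨p, (n : ZMod (l p))⟩ : Σ q, ZMod (l q)) = ⟨p', (n : ZMod (l p'))⟩ := by
  subst h; rfl

theorem swap_len {Q : Type} [DecidableEq Q] {l : Q → ℕ} {q q' : Q} (h : l q = l q') (p : Q) :
    l p = l (Equiv.swap q q' p) := by
  rw [Equiv.swap_apply_def]
  split_ifs with h1 h2
  · rw [h1, h]
  · rw [h2, h]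
  · rfl

theorem valid_swap {Q : Type} [Fintype Q] [DecidableEq Q] (l : Q → ℕ) [∀ q, NeZero (l q)]
    (q q' : Q) (hne : q ≠ q') (heq : l q = l q') (hodd : l q % 2 = 1) :
    ∃ (σ : Equiv.Perm (Σ q, ZMod (l q))) (c : (Σ q, ZMod (l q)) → Bool), ValidM (shM l) σ c ∧
      (∏ y, if c y then -1 else 1) * Equiv.Perm.sign σ = -1 := by
  let f : (Σ q, ZMod (l q)) → (Σ q, ZMod (l q)) := fun y =>
    ⟨Equiv.swap q q' y.1, ZMod.ringEquivCongr (swap_len heq y.1) y.2⟩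
  have hf : ∀ p (n : ℕ), f ⟨p, n⟩ = ⟨Equiv.swap q q' p, n⟩ := by
    intro p n
    simp only [f, map_natCast]
  have hfi : Function.Involutive f := by
    rintro ⟨p, j⟩
    rw [← ZMod.natCast_zmod_val j, hf, hf]
    exact sig_cast (Equiv.swap_apply_self _ _ _) _
  refine ⟨hfi.toPerm, fun _ => false, ⟨?_, ?_, ?_⟩, ?_⟩
  · simp
  · rintro ⟨p, j⟩ _
    simp only [Function.Involutive.coe_toPerm, shM_apply, f, map_add, map_one]
  · simp
  · have hs : hfi.toPerm.support = ({q, q'} : Finset Q).sigma (fun _ => Finset.univ) := by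
      ext ⟨p, j⟩
      simp only [Equiv.Perm.mem_support, Function.Involutive.coe_toPerm, Finset.mem_sigma,
        Finset.mem_univ, and_true, Finset.mem_insert, Finset.mem_singleton]
      constructor
      · intro h
        by_contra hp
        push Not at hp
        apply h
        rw [← ZMod.natCast_zmod_val j, hf]
        exact sig_cast (Equiv.swap_apply_of_ne_of_ne hp.1 hp.2) _
      · rintro (rfl | rfl) h
        · have := congrArg Sigma.fst h
          simp [f] at this
          exact hne this.symm
        · have := congrArg Sigma.fst h
          simp [f] at this
          exact hne this
    rw [sign_invol _ (by ext1 x; simp [hfi x]), hs, Finset.card_sigma, Finset.sum_pair hne]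
    simp only [Finset.card_univ, ZMod.card, ← heq]
    rw [Odd.neg_one_pow (Nat.odd_iff.2 (by omega))]
    simp

theorem no_32 : ∀ S ∈ (({3, 7, 11, 15, 19, 23, 27, 31} : Finset ℕ)).powerset, ∑ x ∈ S, x ≠ 32 := by
  decide +kernel

theorem valid_exists {Q : Type} [Fintype Q] [DecidableEq Q] (l : Q → ℕ) [∀ q, NeZero (l q)]
    (hsum : ∑ q, l q = 32) :
    ∃ (σ : Equiv.Perm (Σ q, ZMod (l q))) (c : (Σ q, ZMod (l q)) → Bool), ValidM (shM l) σ c ∧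
      (∏ y, if c y then -1 else 1) * Equiv.Perm.sign σ = -1 := by
  by_cases h1 : ∃ q, l q % 2 = 0
  · obtain ⟨q, hq⟩ := h1
    have hpos := NeZero.ne (l q)
    rcases Int.units_eq_one_or (Equiv.Perm.sign (Equiv.neg (ZMod (l q)))) with h | h
    · refine valid_refl l q 1 ?_
      rw [sign_add_one, h, Even.neg_one_pow (Nat.even_iff.2 hq),
        Odd.neg_one_pow (Nat.odd_iff.2 (by omega))]
      simp
    · refine valid_refl l q 0 ?_
      rw [h, Even.neg_one_pow (Nat.even_iff.2 hq)]
      simp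
  by_cases h2 : ∃ q, l q % 4 = 1
  · obtain ⟨q, hq⟩ := h2
    refine valid_refl l q 0 ?_
    rw [sign_neg_odd (by omega), sign_addLeft_odd (by omega),
      Odd.neg_one_pow (Nat.odd_iff.2 (by omega)), Even.neg_one_pow (Nat.even_iff.2 (by omega))]
    simp
  by_cases h3 : ∃ q q', q ≠ q' ∧ l q = l q'
  · obtain ⟨q, q', hne, heq⟩ := h3
    exact valid_swap l q q' hne heq (by
      by_contra h
      exact h1 ⟨q, by omega⟩)
  exfalso
  push Not at h1 h2 h3
  have hinj : Function.Injective l := by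
    intro a b hab
    by_contra h
    exact h3 a b h hab
  refine no_32 (Finset.univ.image l) ?_ ?_
  · rw [Finset.mem_powerset]
    intro x hx
    obtain ⟨q, -, rfl⟩ := Finset.mem_image.1 hx
    have a1 := h1 q
    have a2 := h2 q
    have a3 : l q ≤ 32 := by
      rw [← hsum]
      exact Finset.single_le_sum (f := l) (fun _ _ => Nat.zero_le _) (Finset.mem_univ q)
    simp only [Finset.mem_insert, Finset.mem_singleton]
    omega
  · rw [Finset.sum_image (fun a _ b _ h => hinj h), hsum]

theorem structure_thm {X : Type} [Finite X] (m0 m1 : Equiv.Perm X) (h0 : m0 * m0 = 1)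
    (h1 : m1 * m1 = 1) (f0 : ∀ x, m0 x ≠ x) (f1 : ∀ x, m1 x ≠ x) :
    ∃ (Q : Type) (_ : Finite Q) (l : Q → ℕ) (_ : ∀ q, NeZero (l q))
      (F : (Σ q, ZMod (l q)) × Bool ≃ X),
      (∀ x, F (flM _ x) = m0 (F x)) ∧ (∀ x, F (m1M l x) = m1 (F x)) := by
  classical
  obtain ⟨ρ, hρ⟩ : ∃ ρ, ρ = m0 * m1 := ⟨_, rfl⟩
  have i0 : m0⁻¹ = m0 := inv_eq_of_mul_eq_one_left h0
  have i1 : m1⁻¹ = m1 := inv_eq_of_mul_eq_one_left h1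
  have hm1 : m1 = m0 * ρ := by rw [hρ, ← mul_assoc, h0, one_mul]
  have hm0x : ∀ x, m0 (m0 x) = x := fun x => by
    rw [← Equiv.Perm.mul_apply, h0, Equiv.Perm.one_apply]
  have hconj : m0 * ρ * m0⁻¹ = ρ⁻¹ := by
    rw [hρ, mul_inv_rev, i0, i1, ← mul_assoc, h0, one_mul]
  have hcomm : ∀ (n : ℤ) x, m0 ((ρ ^ n) x) = (ρ ^ (-n)) (m0 x) := by
    intro n x
    have : m0 * ρ ^ n * m0⁻¹ = ρ ^ (-n) := by
      rw [← conj_zpow, hconj, inv_zpow']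
    rw [← this]
    simp
  have hadd : ∀ (n m : ℤ) x, (ρ ^ n) ((ρ ^ m) x) = (ρ ^ (n + m)) x := by
    intro n m x
    rw [zpow_add, Equiv.Perm.mul_apply]
  have nofix : ∀ (N : ℤ) y, (ρ ^ N) y ≠ m0 y := by
    intro N y h
    rcases Int.even_or_odd' N with ⟨M, rfl | rfl⟩
    · apply f0 ((ρ ^ M) y)
      rw [hcomm, ← h, hadd]
      congr 2; ring
    · apply f1 ((ρ ^ M) y)
      rw [hm1, Equiv.Perm.mul_apply]
      have : ρ ((ρ ^ M) y) = (ρ ^ (1 + M)) y := by rw [← hadd, zpow_one]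
      rw [this, hcomm, ← h, hadd]
      congr 2; ring
  let r : Setoid X :=
    { r := fun x y => ∃ n : ℤ, y = (ρ ^ n) x ∨ y = m0 ((ρ ^ n) x)
      iseqv := by
        refine ⟨fun x => ⟨0, Or.inl (by simp)⟩, ?_, ?_⟩
        · rintro x y ⟨n, rfl | rfl⟩
          · exact ⟨-n, Or.inl (by rw [hadd]; simp)⟩
          · exact ⟨n, Or.inr (by rw [hcomm, hm0x, hadd]; simp)⟩
        · rintro x y z ⟨n, rfl | rfl⟩ ⟨m, rfl | rfl⟩
          · exact ⟨m + n, Or.inl (by rw [hadd])⟩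
          · exact ⟨m + n, Or.inr (by rw [hadd])⟩
          · exact ⟨-m + n, Or.inr (by rw [← hadd, hcomm (-m), neg_neg])⟩
          · exact ⟨-m + n, Or.inl (by rw [hcomm, hm0x, hadd])⟩ }
  have hr : ∀ x y, r.r x y ↔ ∃ n : ℤ, y = (ρ ^ n) x ∨ y = m0 ((ρ ^ n) x) := fun _ _ => Iff.rfl
  let Q := Quotient r
  let l : Q → ℕ := fun q => Function.minimalPeriod (ρ • ·) q.out
  have hl : ∀ q, NeZero (l q) := fun q => ⟨by
    have h := isOfFinOrder_of_finite ρ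
    have : Function.minimalPeriod (ρ • ·) q.out ∣ orderOf ρ := by
      rw [← MulAction.pow_smul_eq_iff_minimalPeriod_dvd, pow_orderOf_eq_one, one_smul]
    exact (Nat.pos_of_dvd_of_pos this h.orderOf_pos).ne'⟩
  let F0 : (Σ q, ZMod (l q)) × Bool → X := fun p =>
    if p.2 then m0 ((ρ ^ (p.1.2.cast : ℤ)) p.1.1.out) else (ρ ^ (p.1.2.cast : ℤ)) p.1.1.out
  have hP : ∀ (q : Q) (n : ℤ), (ρ ^ ((n : ZMod (l q)).cast : ℤ)) q.out = (ρ ^ n) q.out := by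
    intro q n
    rw [ZMod.coe_intCast]
    exact MulAction.zpow_smul_mod_minimalPeriod ρ q.out n
  have F0f : ∀ (q : Q) (n : ℤ), F0 (⟨q, (n : ZMod (l q))⟩, false) = (ρ ^ n) q.out := by
    intro q n
    rw [← hP]; rfl
  have F0t : ∀ (q : Q) (n : ℤ), F0 (⟨q, (n : ZMod (l q))⟩, true) = m0 ((ρ ^ n) q.out) := by
    intro q n
    rw [← hP]; rfl
  have hrel : ∀ p, r.r p.1.1.out (F0 p) := by
    rintro ⟨⟨q, j⟩, e⟩
    rw [← ZMod.intCast_zmod_cast j]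
    cases e
    · exact ⟨_, Or.inl (F0f _ _)⟩
    · exact ⟨_, Or.inr (F0t _ _)⟩
  have hq : ∀ p, p.1.1 = Quotient.mk r (F0 p) := by
    intro p
    conv_lhs => rw [← Quotient.out_eq p.1.1]
    exact Quotient.sound (hrel p)
  have hper : ∀ (q : Q) (n m : ℤ), (ρ ^ n) q.out = (ρ ^ m) q.out →
      (n : ZMod (l q)) = (m : ZMod (l q)) := by
    intro q n m h
    have h2 : (ρ ^ (m - n)) q.out = q.out := by
      rw [sub_eq_neg_add, ← hadd, ← h, hadd]; simp
    have h3 := (MulAction.zpow_smul_eq_iff_minimalPeriod_dvd (a := ρ) (b := q.out)).1 h2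
    exact (ZMod.intCast_eq_intCast_iff_dvd_sub _ _ _).2 h3
  have hinj : Function.Injective F0 := by
    rintro ⟨⟨q, j⟩, e⟩ ⟨⟨q', j'⟩, e'⟩ h
    have hqq : q = q' := by
      have a := hq (⟨q, j⟩, e)
      have b := hq (⟨q', j'⟩, e')
      rw [h] at a
      exact a.trans b.symm
    subst hqq
    rw [← ZMod.intCast_zmod_cast j, ← ZMod.intCast_zmod_cast j'] at h ⊢
    cases e <;> cases e'
    · rw [F0f, F0f] at h
      rw [hper _ _ _ h]
    · rw [F0f, F0t] at h
      exfalso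
      refine nofix ((j.cast : ℤ) - j'.cast) ((ρ ^ (j'.cast : ℤ)) q.out) ?_
      rw [← h, hadd]; simp
    · rw [F0f, F0t] at h
      exfalso
      refine nofix ((j'.cast : ℤ) - j.cast) ((ρ ^ (j.cast : ℤ)) q.out) ?_
      rw [h, hadd]; simp
    · rw [F0t, F0t] at h
      rw [hper _ _ _ (m0.injective h)]
  have hsurj : Function.Surjective F0 := by
    intro y
    have : r.r (Quotient.mk r y).out y := Quotient.mk_out y
    obtain ⟨n, h | h⟩ := this
    · exact ⟨(⟨Quotient.mk r y, (n : ZMod _)⟩, false), by rw [F0f]; exact h.symm⟩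
    · exact ⟨(⟨Quotient.mk r y, (n : ZMod _)⟩, true), by rw [F0t]; exact h.symm⟩
  have hbij : Function.Bijective F0 := ⟨hinj, hsurj⟩
  have hF : ∀ x, Equiv.ofBijective F0 hbij x = F0 x := fun _ => rfl
  refine ⟨Q, inferInstance, l, hl, Equiv.ofBijective F0 hbij, ?_, ?_⟩
  · rintro ⟨⟨q, j⟩, e⟩
    rw [hF, hF, flM_apply]
    cases e
    · rfl
    · exact (hm0x _).symm
  · rintro ⟨⟨q, j⟩, e⟩
    rw [hF, hF]
    rw [← ZMod.intCast_zmod_cast j]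
    obtain ⟨n, hn⟩ : ∃ n : ℤ, n = j.cast := ⟨_, rfl⟩
    rw [← hn]
    cases e
    · rw [m1M_false, F0f, ← Int.cast_one, ← Int.cast_add, F0t, hm1, Equiv.Perm.mul_apply,
        add_comm, ← hadd, zpow_one]
    · rw [m1M_true, F0t, ← Int.cast_one, ← Int.cast_sub, F0f]
      apply m1.injective
      rw [← Equiv.Perm.mul_apply m1 m1, h1, hm1, Equiv.Perm.mul_apply, Equiv.Perm.one_apply]
      have : ∀ x, ρ x = (ρ ^ (1 : ℤ)) x := fun x => by rw [zpow_one]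
      rw [this, hadd]
      congr 3; ring

theorem condA_all (g : Equiv.Perm (Fin 32 × Bool)) : CondA Prod.fst g := by
  classical
  have hff : flM (Fin 32) * flM (Fin 32) = 1 := by
    ext1 ⟨y, e⟩
    simp [flM_apply]
  have hf0 : ∀ x, flM (Fin 32) x ≠ x := by
    rintro ⟨y, e⟩ h
    rw [flM_apply] at h
    simp at h
  obtain ⟨Q, hQ, l, hl, F, hF0, hF1⟩ := structure_thm (flM (Fin 32)) (g * flM (Fin 32) * g⁻¹) hff
    (by
      calc g * flM (Fin 32) * g⁻¹ * (g * flM (Fin 32) * g⁻¹)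
          = g * (flM (Fin 32) * flM (Fin 32)) * g⁻¹ := by group
        _ = 1 := by rw [hff]; group)
    hf0
    (by
      intro x h
      apply hf0 (g⁻¹ x)
      apply g.injective
      simpa using h)
  letI : Fintype Q := Fintype.ofFinite Q
  obtain ⟨eY, c, hc⟩ := comm_form F (fun y e => hF0 (y, e))
  have hsum : ∑ q, l q = 32 := by
    have := Fintype.card_congr eY
    rw [Fintype.card_sigma, Fintype.card_fin] at this
    simpa only [ZMod.card] using this
  obtain ⟨σ, c', hv, hch⟩ := valid_exists l hsum
  have hA := modelA l σ c' hv hch (F.symm.permCongr g) (by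
    ext1 x
    apply F.injective
    simp only [Equiv.Perm.mul_apply, Equiv.permCongr_apply, Equiv.symm_symm, hF0, hF1,
      Equiv.apply_symm_apply]
    simp)
  have hB := hA.transport (π' := Prod.fst) F eY (fun ⟨y, e⟩ => by rw [hc])
  have : F.permCongr (F.symm.permCongr g) = g := by
    ext1 x
    simp [Equiv.permCongr_apply]
  rwa [this] at hB

theorem part_two (H : Subgroup (Equiv.Perm (Fin (2 * 32))))
    (hH : ∀ g : Equiv.Perm (Fin (2 * 32)), g ∈ H ↔
        ∃ σ : Equiv.Perm (Fin 32), InducedPairPerm g σ ∧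
          Equiv.Perm.sign g = Equiv.Perm.sign σ) : IsMultFree H := by
  simp only [induced_iff] at hH
  refine final_A H hH (fun g => ?_)
  have h := condA_all ((pairEquiv 32).permCongr g)
  have hB := h.transport (π' := pairPi 32) (pairEquiv 32).symm (Equiv.refl _)
    (fun x => pairPi_eq 32 x)
  have : (pairEquiv 32).symm.permCongr ((pairEquiv 32).permCongr g) = g := by
    ext1 x
    simp [Equiv.permCongr_apply]
  rwa [this] at hB

theorem stmt14 :
    (∀ k : ℕ, 33 ≤ k →
      ∀ H : Subgroup (Equiv.Perm (Fin (2 * k))),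
        (∀ g : Equiv.Perm (Fin (2 * k)), g ∈ H ↔
          ∃ σ : Equiv.Perm (Fin k), InducedPairPerm g σ ∧
            Equiv.Perm.sign g = Equiv.Perm.sign σ) →
        ¬ IsMultFree H) ∧
    (∀ H : Subgroup (Equiv.Perm (Fin (2 * 32))),
      (∀ g : Equiv.Perm (Fin (2 * 32)), g ∈ H ↔
        ∃ σ : Equiv.Perm (Fin 32), InducedPairPerm g σ ∧
          Equiv.Perm.sign g = Equiv.Perm.sign σ) →
      IsMultFree H) := by
  exact ⟨part_one, part_two⟩
end

section
/- Let G_5 be the subgroup of S_5 generated by the 5-cycle (1 2 3 4 5) and the 4-cycle (2 3 5 4); G_5 is a Frobenius group of order 20. For every n ≥ 5, letting G_5 × S_{n−5} denote the subgroup of S_n of permutations g that map the block {1,…,5} to itself, act on {1,…,5} as an element of G_5, and act arbitrarily on {6,…,n}, the permutation character of S_n on the cosets of G_5 × S_{n−5} is multiplicity-free. -/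
/-- The Frobenius group of order 20, generated inside `S_5` by the 5-cycle
`(1 2 3 4 5)` and the 4-cycle `(2 3 5 4)` (written here on `{0,…,4}` as the
rotation `i ↦ i + 1` and the cycle `(1 2 4 3)`). -/
def frobenius20 : Subgroup (Equiv.Perm (Fin 5)) :=
  Subgroup.closure
    {finRotate 5, Equiv.swap (1 : Fin 5) 2 * Equiv.swap (2 : Fin 5) 4 * Equiv.swap (4 : Fin 5) 3}


def stmtF (k : Fin 4) (d : Fin 5) (x : Fin 5) : Fin 5 := 2 ^ (k : ℕ) * x + d

def stmtR : Fin 6 → Fin 5 → Fin 5 :=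
  ![![0,1,2,3,4], ![0,1,2,4,3], ![0,1,3,2,4], ![0,1,3,4,2], ![0,1,4,2,3], ![0,1,4,3,2]]

theorem stmtR_check : ∀ r : Fin 6, ∀ D : Fin 5 → Bool, ∃ k : Fin 4, ∃ d : Fin 5,
    (∀ x, D x = D (stmtF k d (stmtR r x))) ∧ ∃ k' : Fin 4, ∃ d' : Fin 5,
     ∀ x, D x = true → x = stmtF k' d' (stmtR r (stmtF k d (stmtR r x))) := by
  decide +kernel

theorem stmtR_coset : ∀ q : Equiv.Perm (Fin 5), ∃ k : Fin 4, ∃ d : Fin 5, ∃ r : Fin 6,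
    ∀ x, q x = stmtF k d (stmtR r x) := by
  decide +kernel

theorem stmtF_mem (k : Fin 4) (d : Fin 5) : ∃ a ∈ frobenius20, ∀ x, a x = stmtF k d x := by
  refine ⟨finRotate 5 ^ (d : ℕ) * (Equiv.swap (1 : Fin 5) 2 * Equiv.swap (2 : Fin 5) 4 *
    Equiv.swap (4 : Fin 5) 3) ^ (k : ℕ), ?_, ?_⟩
  · refine mul_mem (pow_mem (Subgroup.subset_closure (by simp)) _)
      (pow_mem (Subgroup.subset_closure (by simp)) _)
  · revert k d
    decide +kernel

theorem stmt_partial (q : Equiv.Perm (Fin 5)) (D : Fin 5 → Bool) :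
    ∃ a ∈ frobenius20, ∃ b ∈ frobenius20, (∀ x, D x = D (b (q x))) ∧
      ∀ x, D x = true → x = a (q (b (q x))) := by
  obtain ⟨k, d, r, hq⟩ := stmtR_coset q
  obtain ⟨h, hh, hF⟩ := stmtF_mem k d
  obtain ⟨k1, d1, h1, k2, d2, h2⟩ := stmtR_check r D
  obtain ⟨b, hb, hbF⟩ := stmtF_mem k1 d1
  obtain ⟨a, ha, haF⟩ := stmtF_mem k2 d2
  have hq' : ∀ x, h⁻¹ (q x) = stmtR r x := by
    intro x
    rw [hq, ← hF]
    simp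
  refine ⟨a * h⁻¹, mul_mem ha (inv_mem hh), b * h⁻¹, mul_mem hb (inv_mem hh), ?_, ?_⟩
  · intro x
    rw [Equiv.Perm.mul_apply, hq', hbF]
    exact h1 x
  · intro x hx
    rw [Equiv.Perm.mul_apply, Equiv.Perm.mul_apply, hq', hq', hbF, haF]
    exact h2 x hx

theorem stmt_extend {α : Type} [Fintype α] [DecidableEq α] (s : Set α) (f : α → α)
    (hf : Set.InjOn f s) : ∃ σ : Equiv.Perm α, ∀ i ∈ s, σ i = f i := by
  obtain ⟨g, hg⟩ := Set.MapsTo.exists_equiv_extend_of_card_eq (t := (Finset.univ : Finset α))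
    (by simp) (s := s) (f := f) (fun _ _ => by simp) hf
  refine ⟨g.trans (Equiv.subtypeUnivEquiv (by simp)), fun i hi => ?_⟩
  simpa using hg i hi

theorem stmt_same {α β : Type} [Fintype α] [DecidableEq α] [Fintype β] [DecidableEq β]
    (g g' : Equiv.Perm (α ⊕ β))
    (h : ∀ x y, g (Sum.inl x) = Sum.inl y ↔ g' (Sum.inl x) = Sum.inl y) :
    ∃ s t : Equiv.Perm β, g' = Equiv.Perm.sumCongrHom α β (1, s) * g *
      Equiv.Perm.sumCongrHom α β (1, t) := by
  have key : ∀ j y, g' (Sum.inr j) = Sum.inl y → ∃ j', g (Sum.inr j') = Sum.inl y := by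
    intro j y hj
    rcases hx : g⁻¹ (Sum.inl y) with x | j'
    · have h1 : g (Sum.inl x) = Sum.inl y := by rw [← hx]; simp
      rw [h, ← hj] at h1
      simpa using g'.injective h1
    · exact ⟨j', by rw [← hx]; simp⟩
  have key2 : ∀ j, ∃ j', ∀ y, g' (Sum.inr j) = Sum.inl y → g (Sum.inr j') = Sum.inl y := by
    intro j
    rcases hx : g' (Sum.inr j) with y | j'
    · obtain ⟨j', hj'⟩ := key j y hx
      exact ⟨j', fun z hz => by rw [hj', hz]⟩
    · exact ⟨j, fun z hz => by simp at hz⟩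
  choose f hf using key2
  obtain ⟨t, ht⟩ := stmt_extend {j | ∃ y, g' (Sum.inr j) = Sum.inl y} f (by
    rintro i ⟨y, hy⟩ j ⟨z, hz⟩ hij
    have h1 := hf i y hy
    have h2 := hf j z hz
    rw [hij, h2] at h1
    rw [h1, ← hy] at hz
    simpa using (g'.injective hz).symm)
  set T := Equiv.Perm.sumCongrHom α β (1, t) with hT
  have hfix : ∀ y, (g * T) (g'⁻¹ (Sum.inl y)) = Sum.inl y := by
    intro y
    rcases hx : g'⁻¹ (Sum.inl y) with x | j
    · have h1 : g' (Sum.inl x) = Sum.inl y := by rw [← hx]; simp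
      simpa [hT] using (h x y).2 h1
    · have h1 : g' (Sum.inr j) = Sum.inl y := by rw [← hx]; simp
      have h2 := ht j ⟨y, h1⟩
      have h3 := hf j y h1
      simpa [hT, h2] using h3
  have hfix' : ∀ y, (g' * (g * T)⁻¹) (Sum.inl y) = Sum.inl y := by
    intro y
    have := hfix y
    rw [Equiv.Perm.mul_apply]
    conv_lhs => rw [← this]
    simp
  have hm : g' * (g * T)⁻¹ ∈ (Equiv.Perm.sumCongrHom α β).range := by
    apply Equiv.Perm.mem_sumCongrHom_range_of_perm_mapsTo_inl
    rintro _ ⟨y, rfl⟩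
    exact ⟨y, (hfix' y).symm⟩
  obtain ⟨⟨u, s⟩, hus⟩ := hm
  have hu : u = 1 := by
    ext1 y
    have := hfix' y
    rw [← hus] at this
    simpa using this
  subst hu
  refine ⟨s, t, ?_⟩
  rw [hus, ← hT]
  group

theorem stmt_inv (m : ℕ) (g : Equiv.Perm (Fin 5 ⊕ Fin m)) :
    ∃ h₁ ∈ ((frobenius20.prod (⊤ : Subgroup (Equiv.Perm (Fin m)))).map
      (Equiv.Perm.sumCongrHom (Fin 5) (Fin m))),
    ∃ h₂ ∈ ((frobenius20.prod (⊤ : Subgroup (Equiv.Perm (Fin m)))).map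
      (Equiv.Perm.sumCongrHom (Fin 5) (Fin m))), g⁻¹ = h₁ * g * h₂ := by
  have key : ∀ x, ∃ y, ∀ z, g (Sum.inl x) = Sum.inl z → y = z := by
    intro x
    rcases hx : g (Sum.inl x) with y | j
    · exact ⟨y, fun z hz => by simpa using hz⟩
    · exact ⟨x, fun z hz => by simp at hz⟩
  choose f hf using key
  obtain ⟨q, hq⟩ := stmt_extend {x | ∃ y, g (Sum.inl x) = Sum.inl y} f (by
    rintro i ⟨y, hy⟩ j ⟨z, hz⟩ hij
    have h1 := hf i y hy
    have h2 := hf j z hz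
    rw [← h1, hij, h2, ← hz] at hy
    simpa using g.injective hy)
  have hq' : ∀ x y, g (Sum.inl x) = Sum.inl y → q x = y := fun x y hxy => by
    rw [hq x ⟨y, hxy⟩]; exact hf x y hxy
  obtain ⟨a, ha, b, hb, h1, h2⟩ := stmt_partial q (fun x => (g (Sum.inl x)).isLeft)
  obtain ⟨s, t, hst⟩ := stmt_same (Equiv.Perm.sumCongrHom _ _ (a, 1) * g *
      Equiv.Perm.sumCongrHom _ _ (b, 1)) g⁻¹ (by
    intro y x
    simp only [Equiv.Perm.mul_apply, Equiv.Perm.sumCongrHom_apply, Equiv.sumCongr_apply,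
      Sum.map_inl, Equiv.Perm.inv_eq_iff_eq]
    constructor
    · intro h
      -- g (inl (b y)) = inl z, a z = x
      rcases hz : g (Sum.inl (b y)) with z | z
      · have hqi : q (q⁻¹ y) = y := by simp
        have hD := h1 (q⁻¹ y)
        rw [hqi, hz, Sum.isLeft_inl] at hD
        have h3 := h2 _ hD
        rw [hqi] at h3
        rw [hq' _ _ hz] at h3
        rw [hz] at h
        simp at h
        obtain ⟨w, hw⟩ := Sum.isLeft_iff.1 hD
        have := hq' _ _ hw
        simp at this
        rw [← h, ← h3, hw, this]
      · rw [hz] at h; simp at h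
    · intro h
      have hqx := hq' _ _ h.symm
      have hD := h1 x
      have h3 := h2 x (by simp [← h])
      simp only [← h, hqx, Sum.isLeft_inl] at hD
      obtain ⟨w, hw⟩ := Sum.isLeft_iff.1 hD.symm
      rw [hqx, hq' _ _ hw] at h3
      rw [hw, h3]
      simp)
  refine ⟨Equiv.Perm.sumCongrHom _ _ (a, s), ⟨(a, s), ⟨ha, trivial⟩, rfl⟩,
    Equiv.Perm.sumCongrHom _ _ (b, t), ⟨(b, t), ⟨hb, trivial⟩, rfl⟩, ?_⟩
  rw [hst]
  have e1 : ((a, s) : Equiv.Perm (Fin 5) × Equiv.Perm (Fin m)) = (1, s) * (a, 1) := by simp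
  have e2 : ((b, t) : Equiv.Perm (Fin 5) × Equiv.Perm (Fin m)) = (b, 1) * (1, t) := by simp
  rw [e1, e2, map_mul, map_mul]
  group

open CategoryTheory in
theorem stmt_irred {G : Type} [Group G] (V : FDRep ℂ G) [Simple V] (W : Submodule ℂ V)
    (hW : ∀ g, ∀ v ∈ W, V.ρ g v ∈ W) (w : V) (hw : w ∈ W) (hw0 : w ≠ 0) : W = ⊤ := by
  let σ : Representation ℂ G W :=
    { toFun := fun g => (V.ρ g).restrict (hW g)
      map_one' := by ext; simp
      map_mul' := fun x y => by ext; simp }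
  let f : FDRep.of σ ⟶ V :=
    ⟨InducedCategory.homMk (ModuleCat.ofHom W.subtype), fun g => by
      ext x
      rfl⟩
  have hf : ∀ x : W, (f.hom.hom.hom : W →ₗ[ℂ] V) x = x := fun x => rfl
  have : Mono f := by
    apply ((forget₂ (FDRep ℂ G) (FGModuleCat ℂ)) ⋙ (forget₂ (FGModuleCat ℂ) (ModuleCat ℂ))).mono_of_mono_map
    rw [ModuleCat.mono_iff_injective]
    exact Subtype.val_injective
  have h0 : f ≠ 0 := by
    intro h
    have h1 := hf ⟨w, hw⟩
    rw [h] at h1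
    exact hw0 h1.symm
  have hi := isIso_of_mono_of_nonzero h0
  rw [eq_top_iff]
  rintro v -
  have h2 : (f.hom.hom.hom : W →ₗ[ℂ] V) (((inv f).hom.hom.hom : V →ₗ[ℂ] W) v) = v := by
    have h3 : inv f ≫ f = 𝟙 V := by simp
    have h4 := congrArg (fun k : V ⟶ V => (k.hom.hom.hom : V →ₗ[ℂ] V) v) h3
    exact h4
  rw [hf] at h2
  rw [← h2]
  exact Subtype.property _

theorem stmt_gelfand {G : Type} [Group G] [Finite G] (H : Subgroup G)
    (hH : ∀ g : G, ∃ h₁ ∈ H, ∃ h₂ ∈ H, g⁻¹ = h₁ * g * h₂) : IsMultFree H := by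
  classical
  intro V hV
  have := Fintype.ofFinite H
  let ρ := V.ρ
  let e : V →ₗ[ℂ] V := (Fintype.card H : ℂ)⁻¹ • ∑ h : H, ρ h
  have hc : (Fintype.card H : ℂ) ≠ 0 := by simp
  have heh : ∀ h ∈ H, e * ρ h = e := by
    intro h hh
    simp only [e, smul_mul_assoc, Finset.sum_mul, ← map_mul]
    congr 1
    exact Fintype.sum_equiv (Equiv.mulRight ⟨h, hh⟩) _ _ (fun x => rfl)
  have hhe : ∀ h ∈ H, ρ h * e = e := by
    intro h hh
    simp only [e, mul_smul_comm, Finset.mul_sum, ← map_mul]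
    congr 1
    exact Fintype.sum_equiv (Equiv.mulLeft ⟨h, hh⟩) _ _ (fun x => rfl)
  let T : G → V →ₗ[ℂ] V := fun g => e * ρ g * e
  have hTinv : ∀ g, T g⁻¹ = T g := by
    intro g
    obtain ⟨h₁, hh₁, h₂, hh₂, hg⟩ := hH g
    simp only [T]
    rw [hg, map_mul, map_mul]
    calc e * (ρ h₁ * ρ g * ρ h₂) * e = (e * ρ h₁) * ρ g * (ρ h₂ * e) := by simp only [mul_assoc]
      _ = _ := by rw [heh _ hh₁, hhe _ hh₂]
  have hee : e * e = e := by
    conv_lhs => enter [2]; simp only [e]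
    rw [mul_smul_comm, Finset.mul_sum, Finset.sum_congr rfl (fun (h : H) _ => heh h h.2)]
    simp [← Nat.cast_smul_eq_nsmul ℂ, smul_smul, hc]
  have hTT : ∀ x y, T x * T y = (Fintype.card H : ℂ)⁻¹ • ∑ h : H, T (x * h * y) := by
    intro x y
    calc T x * T y = e * ρ x * (e * e) * ρ y * e := by simp only [T, mul_assoc]
      _ = e * ρ x * e * ρ y * e := by rw [hee]
      _ = e * ρ x * ((Fintype.card H : ℂ)⁻¹ • ∑ h : H, ρ h) * ρ y * e := rfl
      _ = _ := by
        simp only [T, map_mul, mul_smul_comm, smul_mul_assoc, Finset.mul_sum, Finset.sum_mul,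
          mul_assoc]
  have hcomm : ∀ x y, T x * T y = T y * T x := by
    intro x y
    rw [hTT, ← hTinv y, ← hTinv x, hTT]
    congr 1
    refine Fintype.sum_equiv (Equiv.inv H) _ _ (fun h => ?_)
    rw [← hTinv]
    congr 1
    simp [mul_assoc]
  let W := Representation.invariants (V.ρ.comp H.subtype)
  have hWe : ∀ w ∈ W, e w = w := by
    intro w hw
    have hw' : ∀ h : H, ρ h w = w := fun h => hw h
    simp [e, hw', ← Nat.cast_smul_eq_nsmul ℂ, smul_smul, hc]
  have heW : ∀ v, e v ∈ W := by
    intro v h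
    exact LinearMap.congr_fun (hhe h h.2) v
  have hspan : ∀ w ∈ W, w ≠ 0 → ∀ w' ∈ W, w' ∈ Submodule.span ℂ (Set.range fun g => T g w) := by
    intro w hw hw0 w' hw'
    have htop : Submodule.span ℂ (Set.range fun g => ρ g w) = ⊤ := by
      refine stmt_irred V _ ?_ w (Submodule.subset_span ⟨1, by simp⟩) hw0
      intro g v hv
      induction hv using Submodule.span_induction with
      | mem x hx =>
        obtain ⟨k, rfl⟩ := hx
        refine Submodule.subset_span ⟨g * k, ?_⟩
        simp only [map_mul]
        rfl
      | zero => simp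
      | add x y _ _ hx hy => rw [map_add]; exact add_mem hx hy
      | smul a x _ hx => rw [map_smul]; exact Submodule.smul_mem _ _ hx
    have h1 : e w' ∈ (Submodule.span ℂ (Set.range fun g => ρ g w)).map e :=
      Submodule.mem_map_of_mem (by rw [htop]; trivial)
    rw [Submodule.map_span, hWe _ hw', ← Set.range_comp] at h1
    convert h1 using 3
    ext g
    change e (ρ g (e w)) = e (ρ g w)
    rw [hWe w hw]
  by_cases hbot : W = ⊥
  · change Module.finrank ℂ W ≤ 1
    rw [hbot]; simp
  obtain ⟨w, hw, hw0⟩ := Submodule.exists_mem_ne_zero_of_ne_bot hbot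
  have hscal : ∀ g, ∃ c : ℂ, ∀ v ∈ W, T g v = c • v := by
    intro g
    have hm : ∀ v ∈ W, T g v ∈ W := fun v _ => heW _
    have : Nontrivial W := Submodule.nontrivial_iff_ne_bot.2 hbot
    obtain ⟨c, hc⟩ := Module.End.exists_eigenvalue ((T g).restrict hm)
    obtain ⟨u, hu⟩ := hc.exists_hasEigenvector
    have hu1 : T g u = c • (u : V) := congrArg Subtype.val hu.apply_eq_smul
    have hu0 : (u : V) ≠ 0 := fun h => hu.2 (Subtype.ext h)
    refine ⟨c, fun v hv => ?_⟩
    have := hspan u u.2 hu0 v hv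
    clear hv
    induction this using Submodule.span_induction with
    | mem x hx =>
      obtain ⟨k, rfl⟩ := hx
      have := LinearMap.congr_fun (hcomm g k) u
      change T g (T k u) = T k (T g u) at this
      change T g (T k u) = c • T k u
      rw [this, hu1, map_smul]
    | zero => simp
    | add x y _ _ hx hy => rw [map_add, hx, hy, smul_add]
    | smul a x _ hx => rw [map_smul, hx, smul_comm]
  choose c hc using hscal
  change Module.finrank ℂ W ≤ 1
  refine finrank_le_one (⟨w, hw⟩ : W) ?_
  rintro ⟨v, hv⟩
  have h1 := hspan w hw hw0 v hv
  have h2 : Submodule.span ℂ (Set.range fun g => T g w) ≤ Submodule.span ℂ {w} := by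
    rw [Submodule.span_le]
    rintro _ ⟨g, rfl⟩
    change T g w ∈ _
    rw [hc g w hw]
    exact Submodule.smul_mem _ _ (Submodule.mem_span_singleton_self w)
  obtain ⟨a, ha⟩ := Submodule.mem_span_singleton.1 (h2 h1)
  exact ⟨a, Subtype.ext ha⟩

theorem stmt15 (m : ℕ) :
    IsMultFree ((frobenius20.prod (⊤ : Subgroup (Equiv.Perm (Fin m)))).map
      (Equiv.Perm.sumCongrHom (Fin 5) (Fin m))) :=
  stmt_gelfand _ (stmt_inv m)
end

section
/- Let F be a field of prime characteristic p and let n ≥ 1. Suppose G ≤ S_n is a subgroup such that the permutation character of S_n on the cosets of G (over ℂ) is multiplicity-free. Then every direct summand U of the permutation FS_n-module F[S_n/G] (the F-vector space with basis the cosets S_n/G, with S_n permuting the basis) is self-dual: U is isomorphic as an FS_n-module to its contragredient dual U* (the dual space with action (g·f)(u) = f(g⁻¹·u)). -/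
open CategoryTheory

/-- The permutation module of `Sₙ` over `F` with basis the cosets `Sₙ/G`. -/
noncomputable def permModule (F : Type) [Field F] (n : ℕ)
    (G : Subgroup (Equiv.Perm (Fin n))) : FDRep F (Equiv.Perm (Fin n)) :=
  FDRep.of (Representation.ofMulAction F (Equiv.Perm (Fin n)) (Equiv.Perm (Fin n) ⧸ G))

open scoped MonoidAlgebra

lemma lin_part {Γ : Type} [Group Γ] [Fintype Γ] (hc : ∀ g : Γ, IsConj g g⁻¹) (H : Subgroup Γ)
    [Fintype H] {V : Type} [AddCommGroup V] [Module ℂ V] [FiniteDimensional ℂ V]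
    (ρ : Representation ℂ Γ V)
    (hW : Module.finrank ℂ (Representation.invariants (ρ.comp H.subtype)) ≤ 1) (g : Γ) :
    ∑ h : H, ∑ k : H, (ρ (h * g * k) - ρ (h * g⁻¹ * k)) = 0 := by
  set W := Representation.invariants (ρ.comp H.subtype) with hWdef
  set E : V →ₗ[ℂ] V := ∑ h : H, ρ h with hE
  set D : V →ₗ[ℂ] V := ρ g - ρ g⁻¹ with hD
  set T := ∑ h : H, ∑ k : H, (ρ (h * g * k) - ρ (h * g⁻¹ * k)) with hT
  have hTE : T = E * D * E := by
    rw [hT, hE, hD, Finset.sum_mul, Finset.sum_mul_sum]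
    refine Finset.sum_congr rfl fun h _ => Finset.sum_congr rfl fun k _ => ?_
    simp [map_mul, mul_sub, sub_mul]
  have hcard : (Fintype.card H : ℂ) ≠ 0 := by exact_mod_cast Fintype.card_ne_zero
  have hEW : ∀ v, E v ∈ W := by
    intro v h
    change ρ h (E v) = E v
    rw [hE, LinearMap.sum_apply, map_sum]
    refine Fintype.sum_equiv (Equiv.mulLeft h) _ _ fun k => ?_
    simp [map_mul]
  have hEid : ∀ w ∈ W, E w = (Fintype.card H : ℂ) • w := by
    intro w hw
    rw [hE, LinearMap.sum_apply, Finset.sum_congr rfl (fun (h : H) _ => show ρ h w = w from hw h)]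
    simp [Nat.cast_smul_eq_nsmul]
  obtain ⟨w, hw⟩ := finrank_le_one_iff.mp hW
  obtain ⟨c, hc'⟩ := hw ⟨E (D w), hEW _⟩
  have hc' : c • (w : V) = E (D w) := congrArg Subtype.val hc'
  have hTc : T = c • E := by
    ext v
    obtain ⟨t, ht⟩ := hw ⟨E v, hEW _⟩
    have ht : t • (w : V) = E v := congrArg Subtype.val ht
    rw [hTE]
    simp only [Module.End.mul_apply, LinearMap.smul_apply]
    rw [← ht, map_smul, map_smul, ← hc', smul_comm]
  have htrρ : ∀ x : Γ, LinearMap.trace ℂ V (ρ x⁻¹) = LinearMap.trace ℂ V (ρ x) := by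
    intro x
    obtain ⟨y, hy⟩ := isConj_iff.mp (hc x)
    rw [← hy, map_mul ρ, LinearMap.trace_mul_comm, ← map_mul]
    simp [← mul_assoc]
  have htr : LinearMap.trace ℂ V T = 0 := by
    rw [hT]
    simp only [Finset.sum_sub_distrib, map_sub, map_sum]
    rw [sub_eq_zero]
    conv_rhs => rw [Finset.sum_comm]
    refine Fintype.sum_equiv (Equiv.inv H) _ _ fun h => Fintype.sum_equiv (Equiv.inv H) _ _ fun k => ?_
    rw [← htrρ]
    simp [mul_assoc]
  have hproj : LinearMap.IsProj W ((Fintype.card H : ℂ)⁻¹ • E) :=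
    ⟨fun v => W.smul_mem _ (hEW v), fun v hv => by simp [hEid v hv, smul_smul, hcard]⟩
  have htrE := hproj.trace
  rw [hTc] at htr ⊢
  simp only [map_smul, smul_eq_mul, mul_eq_zero] at htr htrE
  rcases htr with h | h
  · simp [h]
  · rw [h, mul_zero] at htrE
    have h0 : Module.finrank ℂ W = 0 := by exact_mod_cast htrE.symm
    have hb : W = ⊥ := Submodule.finrank_eq_zero.mp h0
    have : E = 0 := by
      ext v
      have := hEW v
      rw [hb] at this
      simpa using this
    simp [this]

lemma simple_ofModule {Γ : Type} [Group Γ] [Fintype Γ] (M : Type) [AddCommGroup M] [Module ℂ M]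
    [Module ℂ[Γ] M] [IsScalarTower ℂ ℂ[Γ] M] [FiniteDimensional ℂ M] [IsSimpleModule ℂ[Γ] M] :
    Simple (FDRep.of (Representation.ofModule' (k := ℂ) (G := Γ) M)) := by
  have : NeZero (Nat.card Γ : ℂ) := ⟨by exact_mod_cast Nat.card_pos.ne'⟩
  rw [FDRep.simple_iff_end_is_rank_one]
  have hnt : Nontrivial M := IsSimpleModule.nontrivial ℂ[Γ] M
  set X := FDRep.of (Representation.ofModule' (k := ℂ) (G := Γ) M) with hX
  have hne : (𝟙 X) ≠ 0 := by
    intro h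
    obtain ⟨m, hm⟩ := exists_ne (0 : M)
    apply hm
    have := congrArg (fun f : X ⟶ X => f.hom.hom.hom m) h
    exact this
  rw [finrank_eq_one_iff_of_nonzero' _ hne]
  intro f
  let f0 : M →ₗ[ℂ] M := f.hom.hom.hom
  have hcomm : ∀ (g : Γ) (m : M), f0 (MonoidAlgebra.single g (1:ℂ) • m) = MonoidAlgebra.single g (1:ℂ) • f0 m := by
    intro g m
    have := congrArg (fun f : X.V ⟶ X.V => f.hom.hom m) (f.comm g)
    exact this
  let f1 : M →ₗ[ℂ[Γ]] M :=
    { f0 with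
      map_smul' := by
        intro a m
        induction a using MonoidAlgebra.induction_on with
        | of g => exact hcomm g m
        | add a b ha hb =>
          simp only [add_smul] at *
          change f0 _ = _ 
          rw [map_add]
          exact (congrArg₂ (· + ·) ha hb).trans (add_smul a b (f0 m)).symm
        | smul r a ha =>
          change f0 _ = _ 
          rw [smul_assoc, map_smul]
          refine (congrArg (r • ·) ha).trans ?_
          simp [smul_assoc] }
  obtain ⟨c, hc⟩ := (IsSimpleModule.algebraMap_end_bijective_of_isAlgClosed (A := ℂ[Γ]) (V := M) ℂ).2 f1
  refine ⟨c, ?_⟩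
  ext m
  exact LinearMap.congr_fun hc m

lemma self_paired {Γ : Type} [Group Γ] [Fintype Γ] (hc : ∀ g : Γ, IsConj g g⁻¹) (H : Subgroup Γ)
    (hmf : IsMultFree H) (g : Γ) : ∃ h k : H, h * g * k = g⁻¹ := by
  classical
  by_contra hcon
  push Not at hcon
  let a : ℂ[Γ] := ∑ h : H, ∑ k : H, (MonoidAlgebra.single ((h:Γ) * g * k) 1 - MonoidAlgebra.single ((h:Γ) * g⁻¹ * k) 1)
  have hcardΓ : NeZero (Nat.card Γ : ℂ) := ⟨by exact_mod_cast Nat.card_pos.ne'⟩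
  have ha : a = 0 := by
    have hss : IsSemisimpleRing ℂ[Γ] := inferInstance
    have hj := IsSemisimpleRing.jacobson_eq_bot ℂ[Γ]
    rw [← Submodule.mem_bot ℂ[Γ], ← hj, Ring.jacobson, Module.jacobson, Submodule.mem_sInf]
    intro I hI
    have : IsSimpleModule ℂ[Γ] (ℂ[Γ] ⧸ I) := isSimpleModule_iff_isCoatom.mpr hI
    have : Module.Finite ℂ[Γ] (ℂ[Γ] ⧸ I) := inferInstance
    have : Module.Finite ℂ ℂ[Γ] := inferInstance
    have : Module.Finite ℂ (ℂ[Γ] ⧸ I) := Module.Finite.trans ℂ[Γ] _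
    have hW := hmf _ (simple_ofModule (Γ := Γ) (ℂ[Γ] ⧸ I))
    have := lin_part hc H (Representation.ofModule' (k := ℂ) (G := Γ) (ℂ[Γ] ⧸ I)) hW g
    have h2 := LinearMap.congr_fun this (Submodule.Quotient.mk (p := I) 1)
    rw [← Submodule.Quotient.mk_eq_zero]
    rw [← mul_one a, ← smul_eq_mul, Submodule.Quotient.mk_smul]
    simp only [LinearMap.sum_apply, LinearMap.sub_apply] at h2
    simp only [a, Finset.sum_smul, sub_smul]
    exact h2
  have h3 := congrArg (fun x : ℂ[Γ] => x.coeff g⁻¹) ha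
  simp [a, hcon, Finsupp.single_apply] at h3
  have h4 : ∑ x : H, (Finset.univ.filter fun k : H => (x : Γ) * g⁻¹ * k = g⁻¹).card = 0 := by
    exact_mod_cast h3
  rw [Finset.sum_eq_zero_iff] at h4
  have h5 := h4 1 (Finset.mem_univ _)
  rw [Finset.card_eq_zero] at h5
  have : (1 : H) ∈ (Finset.univ.filter fun k : H => ((1 : H) : Γ) * g⁻¹ * k = g⁻¹) := by simp
  rw [h5] at this
  simp at this

open MonoidalCategory

lemma mate_apply {F : Type} [Field F] {X Y : FGModuleCat F} (f : X ⟶ Y) (φ : Module.Dual F Y)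
    (v : X) : (show Module.Dual F X from (fᘁ).hom.hom φ) v = φ (f.hom.hom v) := by
  have h := rightAdjointMate_comp_evaluation f
  have h2 := congrArg (fun q => q.hom.hom (φ ⊗ₜ[F] v)) h
  exact h2

lemma dual_apply {F : Type} [Field F] {Γ : Type} [Group Γ] (U : FDRep F Γ) (g : Γ) (φ : Module.Dual F U.V)
    (v : U.V) : (show Module.Dual F U.V from ((Uᘁ : FDRep F Γ).ρ g) φ) v = φ (U.ρ g⁻¹ v) := by
  have h := Action.rightDual_ρ U g
  have h2 := congrArg (fun q => (show Module.Dual F U.V from q.hom.hom φ) v) h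
  exact h2.trans (mate_apply _ φ v)

lemma self_dual {F : Type} [Field F] {Γ : Type} [Group Γ] (U : FDRep F Γ)
   (b : U.V →ₗ[F] Module.Dual F U.V) (hb : Function.Injective b)
   (hg : ∀ g u v, b (U.ρ g u) v = b u (U.ρ g⁻¹ v)) : Nonempty (U ≅ Uᘁ) := by
  let e : U.V ≃ₗ[F] Module.Dual F U.V := LinearEquiv.ofInjectiveOfFinrankEq b hb (Subspace.dual_finrank_eq).symm
  refine ⟨Action.mkIso (show U.V ≅ (Uᘁ : FDRep F Γ).V from LinearEquiv.toFGModuleCatIso e) ?_⟩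
  intro g
  ext u
  refine LinearMap.ext (fun v => ?_)
  exact (hg g u v).trans (dual_apply U g (b u) v).symm

open scoped MonoidAlgebra
lemma ext1 {F : Type} [Field F] {Ω N : Type} [AddCommGroup N] [Module F N] {f g : F[Ω] →ₗ[F] N}
    (h : ∀ x, f (MonoidAlgebra.single x 1) = g (MonoidAlgebra.single x 1)) : f = g := by
  refine MonoidAlgebra.lhom_ext' fun x => ?_
  refine LinearMap.ext_ring ?_
  exact h x

lemma conc {F : Type} [Field F] {Γ Ω : Type} [Group Γ] [Fintype Ω] [MulAction Γ Ω] {U : Type} [AddCommGroup U] [Module F U]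
   (ρ : Representation F Γ U) (i : U →ₗ[F] F[Ω]) (r : F[Ω] →ₗ[F] U) (hir : ∀ u, r (i u) = u)
   (hi : ∀ g u, i (ρ g u) = Representation.ofMulAction F Γ Ω g (i u))
   (hr : ∀ g x, r (Representation.ofMulAction F Γ Ω g x) = ρ g (r x))
   (hsp : ∀ x y : Ω, ∃ g : Γ, g • x = y ∧ g • y = x) :
   ∃ b : U →ₗ[F] Module.Dual F U, Function.Injective b ∧ ∀ g u v, b (ρ g u) v = b u (ρ g⁻¹ v) := by
  classical
  let c : F[Ω] →ₗ[F] (Ω → F) := (Finsupp.lcoeFun).comp (MonoidAlgebra.coeffLinearEquiv F).toLinearMap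
  let B : F[Ω] →ₗ[F] F[Ω] →ₗ[F] F := (dotProductBilin F F).compl₁₂ c c
  have hB : ∀ x y, B x y = ∑ ω, x.coeff ω * y.coeff ω := fun x y => rfl
  have hBs : ∀ x y, B (MonoidAlgebra.single x 1) (MonoidAlgebra.single y 1) = if x = y then 1 else 0 := by
    intro x y
    simp [hB, Finsupp.single_apply]
  have hBc : ∀ x y, B x y = B y x := fun x y => by simp [hB, mul_comm]
  have hBinv : ∀ g x y, B (Representation.ofMulAction F Γ Ω g x) (Representation.ofMulAction F Γ Ω g y) = B x y := by
    intro g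
    have : B.compl₁₂ (Representation.ofMulAction F Γ Ω g) (Representation.ofMulAction F Γ Ω g) = B := by
      refine ext1 fun x => ext1 fun y => ?_
      simp [hBs, Representation.ofMulAction_single]
    exact fun x y => LinearMap.congr_fun₂ this x y
  have hnd : ∀ x, (∀ y, B x y = 0) → x = 0 := by
    intro x hx
    ext ω
    simpa [hB, Finsupp.single_apply] using hx (MonoidAlgebra.single ω 1)
  have hsymm : ∀ x y, B (i (r x)) y = B x (i (r y)) := by
    have : B.comp (i.comp r) = B.compl₂ (i.comp r) := by
      refine ext1 fun x => ext1 fun y => ?_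
      obtain ⟨g, hx, hy⟩ := hsp x y
      simp only [LinearMap.comp_apply, LinearMap.compl₂_apply]
      rw [hBc, ← hBinv g, ← hi, ← hr, Representation.ofMulAction_single,
        Representation.ofMulAction_single, hx, hy]
    exact fun x y => LinearMap.congr_fun₂ this x y
  refine ⟨B.compl₁₂ i i, ?_, ?_⟩
  · rw [injective_iff_map_eq_zero]
    intro u hu
    have : i u = 0 := by
      refine hnd _ fun y => ?_
      rw [← hir u, hsymm]
      exact LinearMap.congr_fun hu (r y)
    rw [← hir u, this, map_zero]
  · intro g u v
    simp only [LinearMap.compl₁₂_apply]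
    rw [← hBinv g⁻¹, ← hi, ← hi, ← Module.End.mul_apply, ← map_mul]
    simp

theorem stmt18 (F : Type) [Field F] (p : ℕ) (hp : p.Prime) [CharP F p]
    (n : ℕ) (hn : 1 ≤ n) (G : Subgroup (Equiv.Perm (Fin n)))
    (hmf : IsMultFree G)
    -- `U` is a direct summand of the permutation module `F[Sₙ/G]`,
    -- i.e. a retract of it in the category of finite-dimensional `F Sₙ`-modules
    (U : FDRep F (Equiv.Perm (Fin n)))
    (i : U ⟶ permModule F n G) (r : permModule F n G ⟶ U) (hir : i ≫ r = 𝟙 U) :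
    Nonempty (U ≅ Uᘁ) := by
  classical
  have hsp : ∀ x y : Equiv.Perm (Fin n) ⧸ G, ∃ g : Equiv.Perm (Fin n), g • x = y ∧ g • y = x := by
    intro x y
    induction x using QuotientGroup.induction_on with | _ a
    induction y using QuotientGroup.induction_on with | _ b
    obtain ⟨h, k, hk⟩ := self_paired (fun g => by
      rw [Equiv.Perm.isConj_iff_cycleType_eq, Equiv.Perm.cycleType_inv]) G hmf (a⁻¹ * b)
    refine ⟨b * h * a⁻¹, ?_, ?_⟩
    · rw [MulAction.Quotient.smul_coe, eq_comm, QuotientGroup.eq]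
      simp [mul_assoc]
    · rw [MulAction.Quotient.smul_coe, QuotientGroup.eq]
      have : ((b * h * a⁻¹) • b)⁻¹ * a = (k : Equiv.Perm (Fin n)) := by
        rw [inv_mul_eq_iff_eq_mul, smul_eq_mul]
        have := congrArg (b * ·) hk
        simpa [mul_assoc] using this.symm
      rw [this]
      exact k.2
  obtain ⟨b, hb, hg⟩ := conc (Ω := Equiv.Perm (Fin n) ⧸ G) (FDRep.ρ U) i.hom.hom.hom r.hom.hom.hom
    (fun u => congrArg (fun f : U ⟶ U => f.hom.hom.hom u) hir)
    (fun g u => congrArg (fun f => f.hom.hom u) (i.comm g))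
    (fun g u => congrArg (fun f => f.hom.hom u) (r.comm g)) hsp
  exact self_dual U b hb hg
end

section
/- Let F be an algebraically closed field, let G be a finite group, and let M be a nonzero finite-dimensional FG-module which is indecomposable and satisfies: (a) M has a unique simple submodule, and this submodule is isomorphic to the trivial one-dimensional module F; M has a unique maximal (proper) submodule, and the quotient of M by it is isomorphic to the trivial module F; (b) in a composition series of M the trivial module F occurs exactly twice as a composition factor. Then the endomorphism algebra End_{FG}(M) has dimension exactly 2 over F. -/
section helpers
variable {F : Type*} [Field F] {G : Type*} [Group G] {M : Type*} [AddCommGroup M]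
  [Module (MonoidAlgebra F G) M]

theorem aux_section (s : CompositionSeries (Submodule (MonoidAlgebra F G) M))
    (h0 : s.head = ⊥) (h1 : s.last = ⊤) (A B : Submodule (MonoidAlgebra F G) M)
    (hAB : ¬ B ≤ A)
    (ht : ∀ v ∈ B, ∀ g : G, (MonoidAlgebra.of F G g) • v - v ∈ A) (hle : A ≤ B) :
    ∃ i : Fin s.length,
      (∀ v ∈ s i.succ, ∀ g : G, (MonoidAlgebra.of F G g) • v - v ∈ s i.castSucc) ∧
      ¬ s i.succ ⊓ B ≤ s i.castSucc ∧ s i.succ ⊓ A ≤ s i.castSucc := by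
  obtain ⟨i, hi1, hi2⟩ : ∃ i : Fin s.length, s i.castSucc ⊓ B ≤ A ∧ ¬ s i.succ ⊓ B ≤ A := by
    by_contra! hcon
    have : ∀ j : Fin (s.length + 1), s j ⊓ B ≤ A := by
      intro j
      induction j using Fin.induction with
      | zero =>
        have : s 0 = ⊥ := h0
        rw [this]; simp
      | succ i ih => exact hcon i ih
    have h := this (Fin.last _)
    have h2 : s (Fin.last _) = ⊤ := h1
    rw [h2, top_inf_eq] at h
    exact hAB h
  have hcov : s i.castSucc ⋖ s i.succ := s.step i
  have key : ∀ C : Submodule (MonoidAlgebra F G) M, ¬ s i.succ ⊓ C ≤ s i.castSucc →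
      s i.castSucc ⊔ (s i.succ ⊓ C) = s i.succ := by
    intro C hC
    rcases hcov.eq_or_eq (c := s i.castSucc ⊔ (s i.succ ⊓ C)) le_sup_left
      (sup_le hcov.le inf_le_left) with h | h
    · exact absurd (sup_eq_left.mp h) hC
    · exact h
  have hB : ¬ s i.succ ⊓ B ≤ s i.castSucc := fun h =>
    hi2 ((le_inf h inf_le_right).trans hi1)
  have hA : s i.succ ⊓ A ≤ s i.castSucc := by
    by_contra hA
    apply hi2
    intro b hb
    have hb1 : b ∈ s i.castSucc ⊔ (s i.succ ⊓ A) := by rw [key A hA]; exact hb.1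
    obtain ⟨x, hx, a, ha, rfl⟩ := Submodule.mem_sup.mp hb1
    have hxB : x ∈ B := by
      have := B.sub_mem hb.2 (hle ha.2)
      simpa using this
    exact A.add_mem (hi1 ⟨hx, hxB⟩) ha.2
  refine ⟨i, ?_, hB, hA⟩
  intro v hv g
  rw [← key B hB] at hv
  obtain ⟨x, hx, y, hy, rfl⟩ := Submodule.mem_sup.mp hv
  have e : (MonoidAlgebra.of F G g) • (x + y) - (x + y) =
      ((MonoidAlgebra.of F G g) • x - x) + ((MonoidAlgebra.of F G g) • y - y) := by
    rw [smul_add]; abel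
  rw [e]
  refine Submodule.add_mem _ (Submodule.sub_mem _ (Submodule.smul_mem _ _ hx) hx) (hA ⟨?_, ht y hy.2 g⟩)
  exact Submodule.sub_mem _ (Submodule.smul_mem _ _ hy.1) hy.1

variable [Module F M] [IsScalarTower F (MonoidAlgebra F G) M]

theorem aux_submodule (N : Submodule F M)
    (h : ∀ g : G, ∀ v ∈ N, (MonoidAlgebra.of F G g) • v ∈ N) :
    ∃ N' : Submodule (MonoidAlgebra F G) M, ∀ x, x ∈ N' ↔ x ∈ N := by
  refine ⟨{ N.toAddSubmonoid with smul_mem' := ?_ }, fun x => Iff.rfl⟩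
  intro r v hv
  change r • v ∈ N
  induction r using MonoidAlgebra.induction_on with
  | of g => exact h g v hv
  | add a b ha hb => rw [add_smul]; exact N.add_mem ha hb
  | smul c a ha => rw [smul_assoc]; exact N.smul_mem _ ha

theorem aux_linear [SMulCommClass (MonoidAlgebra F G) F M] (f : M →ₗ[F] F) (v0 : M)
    (hv : ∀ g : G, (MonoidAlgebra.of F G g) • v0 = v0)
    (hf : ∀ g : G, ∀ m, f ((MonoidAlgebra.of F G g) • m) = f m) :
    ∃ φ : M →ₗ[MonoidAlgebra F G] M, ∀ m, φ m = f m • v0 := by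
  refine ⟨{ toFun := fun m => f m • v0, map_add' := ?_, map_smul' := ?_ }, fun m => rfl⟩
  · intro x y; rw [map_add, add_smul]
  · intro r m
    change f (r • m) • v0 = r • (f m • v0)
    induction r using MonoidAlgebra.induction_on with
    | of g => rw [hf, smul_comm, hv]
    | add a b ha hb => rw [add_smul, map_add, add_smul, ha, hb, add_smul]
    | smul c a ha => rw [smul_assoc, map_smul, smul_assoc, ha, smul_assoc]

theorem aux_atom (w : M) (hw0 : w ≠ 0) (hw : ∀ g : G, (MonoidAlgebra.of F G g) • w = w)
    [SMulCommClass (MonoidAlgebra F G) F M] :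
    ∃ S : Submodule (MonoidAlgebra F G) M, IsAtom S ∧ ∀ x, x ∈ S ↔ ∃ c : F, c • w = x := by
  obtain ⟨S, hS⟩ := aux_submodule (F := F) (G := G) (F ∙ w) (by
    intro g v hv
    obtain ⟨c, rfl⟩ := Submodule.mem_span_singleton.mp hv
    rw [smul_comm, hw]; exact hv)
  simp only [Submodule.mem_span_singleton] at hS
  refine ⟨S, ⟨?_, ?_⟩, hS⟩
  · rintro rfl
    exact hw0 ((Submodule.mem_bot _).mp ((hS w).mpr ⟨1, one_smul _ _⟩))
  · intro T hT
    by_contra hT0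
    obtain ⟨x, hx, hx0⟩ := (Submodule.ne_bot_iff _).mp hT0
    obtain ⟨c, rfl⟩ := (hS x).mp (hT.le hx)
    have hc : c ≠ 0 := by rintro rfl; simp at hx0
    apply hT.not_ge
    intro y hy
    obtain ⟨d, rfl⟩ := (hS y).mp hy
    have : d • w = (algebraMap F (MonoidAlgebra F G) (d * c⁻¹)) • (c • w) := by
      rw [algebraMap_smul, smul_smul, mul_assoc, inv_mul_cancel₀ hc, mul_one]
    rw [this]
    exact T.smul_mem _ hx

end helpers


theorem stmt19 (F : Type*) [Field F] [IsAlgClosed F]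
    (G : Type*) [Group G] [Finite G]
    (M : Type*) [AddCommGroup M] [Module (MonoidAlgebra F G) M]
    [Module F M] [IsScalarTower F (MonoidAlgebra F G) M]
    [SMulCommClass (MonoidAlgebra F G) F M]
    [FiniteDimensional F M] [Nontrivial M]
    -- `M` is indecomposable
    (hind : ¬ ∃ U V : Submodule (MonoidAlgebra F G) M, U ≠ ⊥ ∧ V ≠ ⊥ ∧ IsCompl U V)
    -- (a) `M` has a unique simple submodule, which is trivial (so `soc M ≅ F`) …
    (hsoc : ∃! S : Submodule (MonoidAlgebra F G) M, IsAtom S)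
    (hsoc' : ∀ S : Submodule (MonoidAlgebra F G) M, IsAtom S →
      ∀ v ∈ S, ∀ g : G, (MonoidAlgebra.of F G g) • v = v)
    -- … and a unique maximal proper submodule, with trivial quotient (so `top M ≅ F`)
    (htop : ∃! P : Submodule (MonoidAlgebra F G) M, IsCoatom P)
    (htop' : ∀ P : Submodule (MonoidAlgebra F G) M, IsCoatom P →
      ∀ v : M, ∀ g : G, (MonoidAlgebra.of F G g) • v - v ∈ P)
    -- (b) in a composition series of `M` the trivial module occurs exactly twice
    (hcomp : ∃ s : CompositionSeries (Submodule (MonoidAlgebra F G) M),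
      s.head = ⊥ ∧ s.last = ⊤ ∧
        Nat.card {i : Fin s.length //
          ∀ v ∈ s i.succ, ∀ g : G, (MonoidAlgebra.of F G g) • v - v ∈ s i.castSucc} = 2) :
    Module.finrank F (M →ₗ[MonoidAlgebra F G] M) = 2 := by

  obtain ⟨s, h0, h1, hcard⟩ := hcomp
  obtain ⟨S, hS, hSu⟩ := hsoc
  obtain ⟨P, hP, hPu⟩ := htop
  have hSinv := hsoc' S hS
  have hPinv := htop' P hP
  have : IsNoetherian (MonoidAlgebra F G) M := isNoetherian_of_tower F inferInstance
  have : IsArtinian (MonoidAlgebra F G) M := isArtinian_of_tower F inferInstance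
  have hSle : ∀ N : Submodule (MonoidAlgebra F G) M, N ≠ ⊥ → S ≤ N := by
    intro N hN
    rcases eq_bot_or_exists_atom_le N with h | ⟨T, hT, hTN⟩
    · exact absurd h hN
    · rw [← hSu T hT]; exact hTN
  have hPge : ∀ N : Submodule (MonoidAlgebra F G) M, N ≠ ⊤ → N ≤ P := by
    intro N hN
    rcases eq_top_or_exists_le_coatom N with h | ⟨T, hT, hTN⟩
    · exact absurd h hN
    · rw [← hPu T hT]; exact hTN
  have hfin : Finite {i : Fin s.length //
          ∀ v ∈ s i.succ, ∀ g : G, (MonoidAlgebra.of F G g) • v - v ∈ s i.castSucc} :=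
    inferInstance
  -- P is nonzero
  have hPbot : P ≠ ⊥ := by
    rintro rfl
    obtain ⟨a, b, hab, -⟩ := Nat.card_eq_two_iff.mp hcard
    have aux : ∀ i j : Fin s.length, i < j → False := by
      intro i j hij
      have l1 : s i.castSucc < s j.castSucc := s.strictMono (by simpa using hij)
      have l2 : s j.castSucc < s j.succ := s.strictMono (by simp [Fin.lt_def])
      have := hP.2 (s j.castSucc) (bot_le.trans_lt l1)
      rw [this] at l2
      exact not_top_lt l2
    rcases lt_trichotomy a.1 b.1 with h | h | h
    · exact aux _ _ h
    · exact hab (Subtype.ext h)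
    · exact aux _ _ h
  have hSP : S ≤ P := hSle P hPbot
  obtain ⟨v0, hv0S, hv0⟩ := (Submodule.ne_bot_iff _).mp hS.1
  have hv0inv := hSinv v0 hv0S
  have hSv0 : ∀ w ∈ S, ∃ c : F, c • v0 = w := by
    obtain ⟨T, hT, hTm⟩ := aux_atom (F := F) (G := G) v0 hv0 hv0inv
    intro w hw
    rw [← hSu T hT] at hw
    exact (hTm w).mp hw
  obtain ⟨m0, -, hm0⟩ := SetLike.exists_of_lt (lt_top_iff_ne_top.mpr hP.1)
  obtain ⟨f, hf0, hPf⟩ := Submodule.exists_le_ker_of_notMem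
    (p := P.restrictScalars F) (v := m0) (by simpa using hm0)
  have hPf' : ∀ x ∈ P, f x = 0 := fun x hx => hPf hx
  have hfg : ∀ g : G, ∀ m, f ((MonoidAlgebra.of F G g) • m) = f m := by
    intro g m
    have := hPf' _ (hPinv m g)
    rwa [map_sub, sub_eq_zero] at this
  have hfP : ∀ x, f x = 0 → x ∈ P := by
    obtain ⟨K, hK⟩ := aux_submodule (F := F) (G := G) (LinearMap.ker f) (by
      intro g v hv
      rw [LinearMap.mem_ker] at hv ⊢
      rw [hfg, hv])
    intro x hx
    refine hPge K ?_ ((hK x).mpr hx)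
    rintro rfl
    exact hf0 ((hK m0).mp trivial)
  obtain ⟨φ0, hφ0⟩ := aux_linear (F := F) (G := G) f v0 hv0inv hfg
  have hli : LinearIndependent F ![(LinearMap.id : M →ₗ[MonoidAlgebra F G] M), φ0] := by
    rw [LinearIndependent.pair_iff]
    intro a b hab
    have e1 := LinearMap.congr_fun hab v0
    simp only [LinearMap.add_apply, LinearMap.smul_apply, LinearMap.id_apply, hφ0,
      hPf' v0 (hSP hv0S), zero_smul, smul_zero, add_zero, LinearMap.zero_apply] at e1
    have ha : a = 0 := (smul_eq_zero.mp e1).resolve_right hv0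
    subst ha
    have e2 := LinearMap.congr_fun hab m0
    simp only [LinearMap.add_apply, LinearMap.smul_apply, LinearMap.id_apply, hφ0,
      zero_smul, zero_add, LinearMap.zero_apply] at e2
    exact ⟨rfl, (smul_eq_zero.mp e2).resolve_right (smul_ne_zero hf0 hv0)⟩
  have hspan : ∀ φ : M →ₗ[MonoidAlgebra F G] M, ∃ a b : F,
      a • (LinearMap.id : M →ₗ[MonoidAlgebra F G] M) + b • φ0 = φ := by
    intro φ
    obtain ⟨c, hc⟩ := Module.End.exists_eigenvalue (K := F) (φ.restrictScalars F : Module.End F M)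
    obtain ⟨u, hu⟩ := hc.exists_hasEigenvector
    have hu0 := hu.2
    have hu1 : φ u = c • u := hu.apply_eq_smul
    obtain ⟨ψ, hψ⟩ : ∃ ψ, ψ = φ - c • (LinearMap.id : M →ₗ[MonoidAlgebra F G] M) := ⟨_, rfl⟩
    have hψu : ψ u = 0 := by simp [hψ, hu1]
    suffices h : ∃ b : F, b • φ0 = ψ by
      obtain ⟨b, hb⟩ := h
      exact ⟨c, b, by rw [hb, hψ]; abel⟩
    have hkill : ∀ x ∈ P, ψ x = 0 := by
      by_contra! hne
      obtain ⟨x, hxP, hx⟩ := hne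
      have hR : P.map ψ ≠ ⊥ := by
        intro h
        exact hx ((Submodule.mem_bot _).mp (h ▸ Submodule.mem_map_of_mem hxP))
      have hItop : LinearMap.range ψ ≠ ⊤ := by
        intro h
        have hsurj : Function.Surjective (ψ.restrictScalars F) :=
          (LinearMap.range_eq_top (f := ψ)).mp h
        have hinj := LinearMap.injective_iff_surjective.mpr hsurj
        exact hu0 (hinj (by simpa using hψu))
      have hkerP : LinearMap.ker ψ ≤ P := by
        apply hPge
        intro h
        exact hx (LinearMap.mem_ker.mp (h ▸ Submodule.mem_top))
      have hRI : ¬ LinearMap.range ψ ≤ P.map ψ := by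
        intro h
        obtain ⟨p, hp, hpe⟩ := h ⟨m0, rfl⟩
        apply hm0
        have : m0 - p ∈ LinearMap.ker ψ := by rw [LinearMap.mem_ker, map_sub, hpe, sub_self]
        simpa using P.add_mem (hkerP this) hp
      obtain ⟨i, ti, i1, i2⟩ := aux_section s h0 h1 ⊥ S (by simpa using hS.1)
        (by intro v hv g; simp [-MonoidAlgebra.of_apply, hSinv v hv g]) bot_le
      obtain ⟨j, tj, j1, j2⟩ := aux_section s h0 h1 (P.map ψ) (LinearMap.range ψ) hRI
        (by
          rintro _ ⟨m, rfl⟩ g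
          exact ⟨_, hPinv m g, by simp [-MonoidAlgebra.of_apply]⟩) LinearMap.map_le_range
      obtain ⟨k, tk, k1, k2⟩ := aux_section s h0 h1 P ⊤ (by simpa using hP.1)
        (fun v _ g => hPinv v g) le_top
      have hij : i ≠ j := by
        rintro rfl
        exact i1 ((inf_le_inf_left _ (hSle _ hR)).trans j2)
      have hjk : j ≠ k := by
        rintro rfl
        exact j1 ((inf_le_inf_left _ (hPge _ hItop)).trans k2)
      have hik : i ≠ k := by
        rintro rfl
        exact i1 ((inf_le_inf_left _ hSP).trans k2)
      obtain ⟨a, b, hab, huniv⟩ := Nat.card_eq_two_iff.mp hcard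
      have m1 : ∀ z, z = a ∨ z = b := fun z => by
        have : z ∈ ({a, b} : Set _) := huniv ▸ Set.mem_univ z
        simpa using this
      have q1 := m1 ⟨i, ti⟩
      have q2 := m1 ⟨j, tj⟩
      have q3 := m1 ⟨k, tk⟩
      rcases q1 with q1 | q1 <;> rcases q2 with q2 | q2 <;> rcases q3 with q3 | q3 <;>
      first
      | exact hij (Subtype.mk.inj (q1.trans q2.symm))
      | exact hik (Subtype.mk.inj (q1.trans q3.symm))
      | exact hjk (Subtype.mk.inj (q2.trans q3.symm))
    have hwinv : ∀ g : G, (MonoidAlgebra.of F G g) • ψ m0 = ψ m0 := by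
      intro g
      have := hkill _ (hPinv m0 g)
      rwa [map_sub, map_smul, sub_eq_zero] at this
    have hwS : ψ m0 ∈ S := by
      by_cases hw : ψ m0 = 0
      · rw [hw]; exact S.zero_mem
      · obtain ⟨T, hT, hTm⟩ := aux_atom (F := F) (G := G) (ψ m0) hw hwinv
        rw [← hSu T hT]
        exact (hTm _).mpr ⟨1, one_smul _ _⟩
    obtain ⟨d, hd⟩ := hSv0 _ hwS
    have hψF : ∀ (c : F) (m : M), ψ (c • m) = c • ψ m := fun c m =>
      (ψ.restrictScalars F).map_smul c m
    refine ⟨d / f m0, ?_⟩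
    ext m
    have hm : m - (f m / f m0) • m0 ∈ P := by
      apply hfP
      rw [map_sub, map_smul, smul_eq_mul, div_mul_cancel₀ _ hf0, sub_self]
    have := hkill _ hm
    rw [map_sub, hψF, sub_eq_zero, ← hd, smul_smul] at this
    rw [LinearMap.smul_apply, hφ0, smul_smul, this]
    congr 1
    ring
  have hb := Module.finrank_eq_card_basis (Module.Basis.mk hli (by
    intro φ _
    obtain ⟨a, b, rfl⟩ := hspan φ
    simp only [Matrix.range_cons, Matrix.range_empty, Set.union_empty, Set.singleton_union]
    exact Submodule.mem_span_pair.mpr ⟨a, b, rfl⟩))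
  simpa using hb
end
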